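/- Consider the fully connected sign network with i.i.d. standard normal weights: ω_0 = ω ∈ {-1,1}^n, ω_t = sign(θ_t ω_{t-1}) for t = 1,...,T_n, with θ_1,...,θ_{T_n} independent n×n matrices of i.i.d. N(0,1) entries, and f_{n,T_n}(ω) = h_n(ω_{T_n}) for Boolean functions h_n : {-1,1}^n → {-1,1}. Let 1/2 ≥ ε_n ↓ 0 with n·ε_n → ∞, let K_n satisfy K_n/log(1/ε_n) → ∞, and let b_n → 0 with n·b_n → ∞. If T_n ∈ [K_n, e^{b_n n}], then for any choice of Boolean functions {h_n}, the random functions {f_{n,T_n}} are annealed quantitatively noise sensitive at level {ε_n}: lim_{n→∞} Cov_{Θ,ω,ω^{ε_n}}(f_{n,T_n}(ω), f_{n,T_n}(ω^{ε_n})) = 0. -/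

import Mathlib

open Finset Filter MeasureTheory ProbabilityTheory

noncomputable section

/-- The ±1 real value of a Boolean bit. -/
def chi (b : Bool) : ℝ := if b then 1 else -1

/-- The joint probability of the pair `(ω, ω^ε)`, where `ω` is uniform on `{-1,1}^n` and
`ω^ε` flips each bit of `ω` independently with probability `ε`. -/
def pairWeight (n : ℕ) (ε : ℝ) (ω η : Fin n → Bool) : ℝ :=
  (1 / 2) ^ n * ∏ i, (if ω i = η i then 1 - ε else ε)

/-- Expectation of `g ω` for `ω` uniform on `{-1,1}^n`. -/
def unifMean (n : ℕ) (g : (Fin n → Bool) → ℝ) : ℝ := (∑ ω, g ω) / 2 ^ n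

/-- Expectation of `F ω ω^ε` over the correlated pair `(ω, ω^ε)`. -/
def pairMean (n : ℕ) (ε : ℝ) (F : (Fin n → Bool) → (Fin n → Bool) → ℝ) : ℝ :=
  ∑ ω, ∑ η, pairWeight n ε ω η * F ω η

/-- `Cov_{ω,ω^ε}(g(ω), g(ω^ε))` for a fixed real-valued function `g` on the cube. -/
def noiseCov (n : ℕ) (ε : ℝ) (g : (Fin n → Bool) → ℝ) : ℝ :=
  pairMean n ε (fun ω η => g ω * g η) - unifMean n g ^ 2

/-- `P_{ω,ω^ε}(f(ω) ≠ f(ω^ε))` for a fixed Boolean function `f`. -/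
def disagreeProb (n : ℕ) (ε : ℝ) (f : (Fin n → Bool) → Bool) : ℝ :=
  pairMean n ε (fun ω η => if f ω = f η then 0 else 1)

/-- The sign function with the convention `sgn z = 1` if `z > 0` and `-1` otherwise. -/
def sgn (x : ℝ) : ℝ := if 0 < x then 1 else -1

/-- One layer of the sign network: `x ↦ sign(θ x)`, coordinatewise. -/
def layerMap (n : ℕ) (θ : Fin n → Fin n → ℝ) (x : Fin n → ℝ) : Fin n → ℝ :=
  fun i => sgn (∑ j, θ i j * x j)

/-- The full network: `ω_T` obtained from `ω_0 = x` by `ω_t = sign(θ_t ω_{t-1})`. -/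
def network (n T : ℕ) (Θ : Fin T → Fin n → Fin n → ℝ) (x : Fin n → ℝ) : Fin n → ℝ :=
  (List.ofFn Θ).foldl (fun y θ => layerMap n θ y) x

/-- The Boolean output `f_{n,T}(ω) = h(ω_T)` of the network. -/
def boolOut (n T : ℕ) (h : (Fin n → Bool) → Bool) (Θ : Fin T → Fin n → Fin n → ℝ)
    (ω : Fin n → Bool) : Bool :=
  h fun i => decide (0 < network n T Θ (fun j => chi (ω j)) i)

/-- The ±1-valued output of the network. -/
def netOut (n T : ℕ) (h : (Fin n → Bool) → Bool) (Θ : Fin T → Fin n → Fin n → ℝ)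
    (ω : Fin n → Bool) : ℝ :=
  chi (boolOut n T h Θ ω)

/-- The law of the i.i.d. standard normal weights `Θ = (θ_1, ..., θ_T)`. -/
def weightMeas (n T : ℕ) : Measure (Fin T → Fin n → Fin n → ℝ) :=
  Measure.pi fun _ => Measure.pi fun _ => Measure.pi fun _ => gaussianReal 0 1

/-- The annealed covariance `Cov_{Θ,ω,ω^ε}(f_{n,T}(ω), f_{n,T}(ω^ε))`. -/
def annealedCov (n T : ℕ) (ε : ℝ) (h : (Fin n → Bool) → Bool) : ℝ :=
  (∫ Θ, pairMean n ε (fun ω η => netOut n T h Θ ω * netOut n T h Θ η) ∂weightMeas n T)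
    - (∫ Θ, unifMean n (netOut n T h Θ) ∂weightMeas n T) ^ 2

/-!
By Sheppard's formula, a Gaussian row `θ` gives `θ · x` and `θ · y` opposite signs with probability
`arccos (1 - 2 d / n) / π`, where `d` is the Hamming distance of the sign vectors `x` and `y`.
Averaged over the weights, a layer therefore maps a pair of inputs to a uniform point and its
perturbation at this flip probability, and the pair performs a Markov chain driven by `d` alone.

The last layer acts as a noise operator, so by Walsh expansion the squared covariance is at most the
mean of the squared overlap `(1 - 2 d / n) ^ 2` one layer earlier. Since `arcsin` is convex on
`[0, 1]`, a layer contracts the squared overlap by some `γ < 1`, up to an error `1 / n`, as long as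
`d` stays a proportion `α` away from the absorbing distances `0` and `n`. The singularity of
`arccos` at `± 1` makes those repelling: `1 / d + 1 / (n - d)` is halved by each layer, up to
`O (1 / n)`, and `e ^ (-d) + e ^ (-(n - d))` bounds the probability of absorption. Adding
`4 (1 - γ) α n (1 / d + 1 / (n - d))` to the squared overlap gives a Lyapunov function that starts
below `2 / ε`, contracts by `γ`, and settles
at order `α`. Finally `α` is arbitrary.
-/

section Sheppard

/-- The standard Gaussian measure on the plane. -/
abbrev planeGaussian : Measure (ℝ × ℝ) := (gaussianReal 0 1).prod (gaussianReal 0 1)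

lemma planeGaussian_eq_withDensity :
    planeGaussian = volume.withDensity fun z => gaussianPDF 0 1 z.1 * gaussianPDF 0 1 z.2 := by
  rw [planeGaussian, gaussianReal_of_var_ne_zero _ one_ne_zero,
    prod_withDensity (by fun_prop) (by fun_prop)]
  rfl

lemma gaussianPDF_mul_gaussianPDF_polar (r θ : ℝ) :
    gaussianPDF 0 1 (r * Real.cos θ) * gaussianPDF 0 1 (r * Real.sin θ) =
      gaussianPDF 0 1 r * gaussianPDF 0 1 0 := by
  have pdf_mul (x y : ℝ) : gaussianPDFReal 0 1 x * gaussianPDFReal 0 1 y =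
      (√(2 * Real.pi))⁻¹ ^ 2 * Real.exp (-(x ^ 2 + y ^ 2) / 2) := by
    rw [neg_add, add_div, Real.exp_add]
    simp only [gaussianPDFReal, NNReal.coe_one, mul_one, sub_zero]
    ring
  simp only [gaussianPDF, ← ENNReal.ofReal_mul (gaussianPDFReal_nonneg _ _ _), pdf_mul]
  congr 5
  linear_combination r ^ 2 * Real.sin_sq_add_cos_sq θ

lemma planeGaussian_apply_eq_mul_volume {S : Set (ℝ × ℝ)} (hS : MeasurableSet S) {A : Set ℝ}
    (hA : MeasurableSet A) (hSA : ∀ r θ : ℝ, 0 < r → θ ∈ Set.Ioo (-Real.pi) Real.pi →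
      ((r * Real.cos θ, r * Real.sin θ) ∈ S ↔ θ ∈ A)) :
    planeGaussian S =
      (∫⁻ r in Set.Ioi (0 : ℝ), ENNReal.ofReal r * (gaussianPDF 0 1 r * gaussianPDF 0 1 0)) *
        volume (A ∩ Set.Ioo (-Real.pi) Real.pi) := by
  have integrand_polar : ∀ p ∈ polarCoord.target,
      ENNReal.ofReal p.1 • S.indicator
        (fun z : ℝ × ℝ => gaussianPDF 0 1 z.1 * gaussianPDF 0 1 z.2) (polarCoord.symm p) =
      ENNReal.ofReal p.1 * (gaussianPDF 0 1 p.1 * gaussianPDF 0 1 0) * A.indicator 1 p.2 := by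
    rintro ⟨r, θ⟩ ⟨hr, hθ⟩
    have hmem := hSA r θ hr hθ
    simp only [polarCoord_symm_apply, smul_eq_mul]
    by_cases hθA : θ ∈ A
    · rw [Set.indicator_of_mem (hmem.2 hθA), Set.indicator_of_mem hθA,
        gaussianPDF_mul_gaussianPDF_polar, Pi.one_apply, mul_one]
    · rw [Set.indicator_of_notMem (mt hmem.1 hθA), Set.indicator_of_notMem hθA, mul_zero, mul_zero]
  rw [planeGaussian_eq_withDensity, withDensity_apply _ hS, ← lintegral_indicator hS,
    ← lintegral_comp_polarCoord_symm,
    setLIntegral_congr_fun polarCoord.open_target.measurableSet integrand_polar,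
    polarCoord_target, Measure.volume_eq_prod, ← Measure.prod_restrict,
    lintegral_prod_mul (f := fun r => ENNReal.ofReal r * (gaussianPDF 0 1 r * gaussianPDF 0 1 0))
      (by fun_prop) ((measurable_one.indicator hA).aemeasurable),
    lintegral_indicator_one hA, Measure.restrict_apply hA]

lemma planeGaussian_real_of_polar {S : Set (ℝ × ℝ)} (hS : MeasurableSet S) {A : Set ℝ}
    (hA : MeasurableSet A) (hSA : ∀ r θ : ℝ, 0 < r → θ ∈ Set.Ioo (-Real.pi) Real.pi →
      ((r * Real.cos θ, r * Real.sin θ) ∈ S ↔ θ ∈ A)) :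
    planeGaussian.real S = volume.real (A ∩ Set.Ioo (-Real.pi) Real.pi) / (2 * Real.pi) := by
  have total := planeGaussian_apply_eq_mul_volume .univ .univ (by simp)
  rw [measure_univ, Set.univ_inter] at total
  have hC := congrArg ENNReal.toReal total
  rw [ENNReal.toReal_one, ENNReal.toReal_mul, ← measureReal_def,
    Real.volume_real_Ioo_of_le (by linarith [Real.pi_pos]), sub_neg_eq_add, ← two_mul] at hC
  rw [measureReal_def, planeGaussian_apply_eq_mul_volume hS hA hSA, ENNReal.toReal_mul,
    ← measureReal_def, eq_div_iff (by positivity), mul_right_comm, ← hC, one_mul]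

lemma sin_mul_abs_sin_lt_cos_mul_cos_iff {a θ : ℝ} (ha₀ : 0 ≤ a) (ha : a ≤ Real.pi / 2)
    (hθ : θ ∈ Set.Ioo (-Real.pi) Real.pi) :
    Real.sin a * |Real.sin θ| < Real.cos a * Real.cos θ ↔ |θ| < Real.pi / 2 - a := by
  have hθ_abs : |θ| < Real.pi := abs_lt.2 hθ
  have hθ₀ := abs_nonneg θ
  rw [Real.abs_sin_eq_sin_abs_of_abs_le_pi hθ_abs.le, ← Real.cos_abs θ, ← sub_pos, ← Real.cos_add]
  constructor
  · intro hcos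
    by_contra! hle
    exact hcos.not_ge (Real.cos_nonpos_of_pi_div_two_le_of_le (by linarith) (by linarith))
  · exact fun hlt => Real.cos_pos_of_mem_Ioo ⟨by linarith, by linarith⟩

lemma planeGaussian_real_cone {a : ℝ} (ha₀ : 0 ≤ a) (ha : a ≤ Real.pi / 2) :
    planeGaussian.real {z | Real.sin a * |z.2| < Real.cos a * z.1} = 1 / 2 - a / Real.pi := by
  have hπ := Real.pi_pos
  rw [planeGaussian_real_of_polar (A := Set.Ioo (-(Real.pi / 2 - a)) (Real.pi / 2 - a))
    (measurableSet_lt (by fun_prop) (by fun_prop)) measurableSet_Ioo,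
    Set.inter_eq_left.2 (Set.Ioo_subset_Ioo (by linarith) (by linarith)),
    Real.volume_real_Ioo_of_le (by linarith)]
  · field_simp
    ring
  · intro r θ hr hθ
    rw [Set.mem_Ioo, ← abs_lt, ← sin_mul_abs_sin_lt_cos_mul_cos_iff ha₀ ha hθ, Set.mem_ofPred_eq,
      abs_mul, abs_of_pos hr, mul_left_comm, mul_left_comm (Real.cos a), mul_lt_mul_iff_right₀ hr]

variable {Ω : Type*} [MeasurableSpace Ω] {P : Measure Ω} {X Y : Ω → ℝ}

lemma measureReal_abs_lt_of_indep_gaussian (hindep : IndepFun X Y P) {a c : ℝ} (ha₀ : 0 ≤ a)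
    (ha : a ≤ Real.pi / 2) (hc : 0 < c)
    (hX : HasLaw X (gaussianReal 0 ((c * Real.cos a) ^ 2).toNNReal) P)
    (hY : HasLaw Y (gaussianReal 0 ((c * Real.sin a) ^ 2).toNNReal) P) :
    P.real {ω | |Y ω| < X ω} = 1 / 2 - a / Real.pi := by
  have scale (k : ℝ) : gaussianReal 0 (k ^ 2).toNNReal = (gaussianReal 0 1).map (k * ·) := by
    rw [gaussianReal_map_const_mul, mul_zero, mul_one, Real.toNNReal_of_nonneg (sq_nonneg k)]
  have : IsProbabilityMeasure P := hX.isProbabilityMeasure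
  have law : P.map (fun ω => (X ω, Y ω)) =
      planeGaussian.map (Prod.map (c * Real.cos a * ·) (c * Real.sin a * ·)) := by
    rw [(indepFun_iff_map_prod_eq_prod_map_map hX.aemeasurable hY.aemeasurable).1 hindep,
      hX.map_eq, hY.map_eq, scale, scale, Measure.map_prod_map _ _ (by fun_prop) (by fun_prop)]
  have hS : MeasurableSet {z : ℝ × ℝ | |z.2| < z.1} := measurableSet_lt (by fun_prop) (by fun_prop)
  have hsin := Real.sin_nonneg_of_nonneg_of_le_pi ha₀ (by linarith)
  rw [← planeGaussian_real_cone ha₀ ha]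
  calc P.real {ω | |Y ω| < X ω}
      = (P.map fun ω => (X ω, Y ω)).real {z : ℝ × ℝ | |z.2| < z.1} :=
        (map_measureReal_apply_of_aemeasurable (hX.aemeasurable.prodMk hY.aemeasurable) hS).symm
    _ = planeGaussian.real {z | Real.sin a * |z.2| < Real.cos a * z.1} := by
        rw [law, map_measureReal_apply (by fun_prop) hS]
        congr 1
        ext z
        simp only [Set.preimage_ofPred_eq, Set.mem_ofPred_eq, Prod.map_fst, Prod.map_snd, abs_mul,
          abs_of_pos hc, abs_of_nonneg hsin, mul_assoc, mul_lt_mul_iff_right₀ hc]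

lemma indepFun_add_sub_of_variance_eq (hXY : HasGaussianLaw (fun ω => (X ω, Y ω)) P)
    (hvar : Var[X; P] = Var[Y; P]) : IndepFun (X + Y) (X - Y) P := by
  have : IsProbabilityMeasure P := hXY.isProbabilityMeasure
  have hX : MemLp X 2 P := hXY.fst.memLp_two
  have hY : MemLp Y 2 P := hXY.snd.memLp_two
  refine HasGaussianLaw.indepFun_of_covariance_eq_zero ?_ ?_
  · exact hXY.map_fun ((ContinuousLinearMap.fst ℝ ℝ ℝ + .snd ℝ ℝ ℝ).prod
      (ContinuousLinearMap.fst ℝ ℝ ℝ - .snd ℝ ℝ ℝ))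
  · rw [covariance_add_left hX hY (hX.sub hY), covariance_sub_right hX hX hY,
      covariance_sub_right hY hX hY, covariance_self hX.aemeasurable,
      covariance_self hY.aemeasurable, hvar, covariance_comm X Y]
    ring

theorem measureReal_pos_and_pos_of_hasGaussianLaw (hXY : HasGaussianLaw (fun ω => (X ω, Y ω)) P)
    (hX : P[X] = 0) (hY : P[Y] = 0) {v ρ : ℝ} (hv : 0 < v) (hρ : ρ ∈ Set.Icc (-1) 1)
    (hXX : Var[X; P] = v) (hYY : Var[Y; P] = v) (hcov : cov[X, Y; P] = v * ρ) :
    P.real {ω | 0 < X ω ∧ 0 < Y ω} = 1 / 2 - Real.arccos ρ / (2 * Real.pi) := by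
  have : IsProbabilityMeasure P := hXY.isProbabilityMeasure
  have hX₂ : MemLp X 2 P := hXY.fst.memLp_two
  have hY₂ : MemLp Y 2 P := hXY.snd.memLp_two
  set a := Real.arccos ρ / 2 with ha
  have hcos : 2 * Real.cos a ^ 2 = 1 + ρ := by
    rw [Real.cos_sq, ha, mul_div_cancel₀ _ two_ne_zero, Real.cos_arccos hρ.1 hρ.2]
    ring
  have indep : IndepFun (X + Y) (X - Y) P :=
    indepFun_add_sub_of_variance_eq hXY (hXX.trans hYY.symm)
  have law_add : HasLaw (X + Y) (gaussianReal 0 ((2 * √v * Real.cos a) ^ 2).toNNReal) P := by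
    refine ⟨(hX₂.add hY₂).aemeasurable, ?_⟩
    rw [hXY.add.map_eq_gaussianReal, variance_add hX₂ hY₂, hXX, hYY, hcov]
    congr 2
    · simp [integral_add hXY.fst.integrable hXY.snd.integrable, hX, hY]
    · rw [mul_pow, mul_pow, Real.sq_sqrt hv.le]
      linear_combination -2 * v * hcos
  have law_sub : HasLaw (X - Y) (gaussianReal 0 ((2 * √v * Real.sin a) ^ 2).toNNReal) P := by
    refine ⟨(hX₂.sub hY₂).aemeasurable, ?_⟩
    rw [hXY.sub.map_eq_gaussianReal, variance_sub hX₂ hY₂, hXX, hYY, hcov]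
    congr 2
    · simp [integral_sub hXY.fst.integrable hXY.snd.integrable, hX, hY]
    · rw [mul_pow, mul_pow, Real.sq_sqrt hv.le, Real.sin_sq]
      linear_combination 2 * v * hcos
  have cone := measureReal_abs_lt_of_indep_gaussian indep (a := a) (c := 2 * √v)
    (by linarith [Real.arccos_nonneg ρ]) (by linarith [Real.arccos_le_pi ρ]) (by positivity)
    law_add law_sub
  rw [← div_div, ← ha, ← cone]
  congr 1
  ext ω
  simp only [Set.mem_ofPred_eq, Pi.add_apply, Pi.sub_apply, abs_lt]
  constructor <;> rintro ⟨h₁, h₂⟩ <;> constructor <;> linarith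

lemma measureReal_pos_of_hasGaussianLaw (hX : HasGaussianLaw X P) (hX₀ : P[X] = 0)
    (hvar : Var[X; P] ≠ 0) : P.real {ω | 0 < X ω} = 1 / 2 := by
  have hpair : HasGaussianLaw (fun ω => (X ω, X ω)) P :=
    hX.map_fun ((ContinuousLinearMap.id ℝ ℝ).prod (.id ℝ ℝ))
  have := measureReal_pos_and_pos_of_hasGaussianLaw hpair hX₀ hX₀ (ρ := 1)
    ((variance_nonneg X P).lt_of_ne' hvar) (by norm_num) rfl rfl
    (by rw [covariance_self hX.aemeasurable, mul_one])
  simpa using this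

theorem measureReal_decide_pos_of_hasGaussianLaw (hXY : HasGaussianLaw (fun ω => (X ω, Y ω)) P)
    (hX : P[X] = 0) (hY : P[Y] = 0) {v ρ : ℝ} (hv : 0 < v) (hρ : ρ ∈ Set.Icc (-1) 1)
    (hXX : Var[X; P] = v) (hYY : Var[Y; P] = v) (hcov : cov[X, Y; P] = v * ρ) (α β : Bool) :
    P.real {ω | decide (0 < X ω) = α ∧ decide (0 < Y ω) = β} =
      1 / 2 * if α = β then 1 - Real.arccos ρ / Real.pi else Real.arccos ρ / Real.pi := by
  have : IsProbabilityMeasure P := hXY.isProbabilityMeasure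
  set A := {ω | 0 < X ω}
  set B := {ω | 0 < Y ω}
  have hA : NullMeasurableSet A P := nullMeasurableSet_lt aemeasurable_const hXY.fst.aemeasurable
  have hB : NullMeasurableSet B P := nullMeasurableSet_lt aemeasurable_const hXY.snd.aemeasurable
  have pA : P.real A = 1 / 2 :=
    measureReal_pos_of_hasGaussianLaw hXY.fst hX (hXX.trans_ne hv.ne')
  have pB : P.real B = 1 / 2 :=
    measureReal_pos_of_hasGaussianLaw hXY.snd hY (hYY.trans_ne hv.ne')
  have pAB : P.real (A ∩ B) = 1 / 2 - Real.arccos ρ / (2 * Real.pi) :=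
    measureReal_pos_and_pos_of_hasGaussianLaw hXY hX hY hv hρ hXX hYY hcov
  have split_A : P.real (A ∩ B) + P.real (A ∩ Bᶜ) = P.real A := measureReal_inter_add_sdiff₀ hB
  have split_B : P.real (B ∩ A) + P.real (B ∩ Aᶜ) = P.real B := measureReal_inter_add_sdiff₀ hA
  have split_compl : P.real (Aᶜ ∩ B) + P.real (Aᶜ ∩ Bᶜ) = P.real Aᶜ :=
    measureReal_inter_add_sdiff₀ hB
  rw [probReal_compl_eq_one_sub₀ hA] at split_compl
  rw [Set.inter_comm B A, Set.inter_comm B] at split_B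
  have hπ : Real.arccos ρ / (2 * Real.pi) = 1 / 2 * (Real.arccos ρ / Real.pi) := by ring
  cases α <;> cases β <;>
    simp only [decide_eq_true_eq, decide_eq_false_iff_not, reduceCtorEq, if_true, if_false]
  · change P.real (Aᶜ ∩ Bᶜ) = _
    linarith
  · change P.real (Aᶜ ∩ B) = _
    linarith
  · change P.real (A ∩ Bᶜ) = _
    linarith
  · change P.real (A ∩ B) = _
    linarith

end Sheppard

section GaussianRow

variable {ι : Type*} [Fintype ι]

/-- The law of a vector of i.i.d. standard normal entries, such as a row of a weight matrix. -/
abbrev gaussianRow (ι : Type*) [Fintype ι] : Measure (ι → ℝ) :=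
  Measure.pi fun _ => gaussianReal 0 1

lemma hasLaw_eval_gaussianRow (i : ι) :
    HasLaw (fun g : ι → ℝ => g i) (gaussianReal 0 1) (gaussianRow ι) :=
  (measurePreserving_eval (fun _ : ι => gaussianReal 0 1) i).hasLaw

lemma iIndepFun_eval_gaussianRow : iIndepFun (fun i (g : ι → ℝ) => g i) (gaussianRow ι) :=
  iIndepFun_pi (X := fun _ (r : ℝ) => r) fun _ => aemeasurable_id

lemma hasGaussianLaw_gaussianRow_linear_pair (x y : ι → ℝ) :
    HasGaussianLaw (fun g => (∑ i, g i * x i, ∑ i, g i * y i)) (gaussianRow ι) := by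
  have h := iIndepFun_eval_gaussianRow.hasGaussianLaw fun i : ι =>
    (hasLaw_eval_gaussianRow i).hasGaussianLaw
  let pairing (z : ι → ℝ) : (ι → ℝ) →L[ℝ] ℝ := ∑ i, z i • ContinuousLinearMap.proj i
  have pairing_apply (z g : ι → ℝ) : pairing z g = ∑ i, g i * z i := by simp [pairing, mul_comm]
  simpa only [ContinuousLinearMap.prod_apply, pairing_apply] using
    h.map_fun ((pairing x).prod (pairing y))

lemma integral_gaussianRow_linear (x : ι → ℝ) : ∫ g, ∑ i, g i * x i ∂gaussianRow ι = 0 := by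
  rw [integral_finsetSum]
  · refine Finset.sum_eq_zero fun i _ => ?_
    rw [integral_mul_const, (hasLaw_eval_gaussianRow i).integral_eq, integral_id_gaussianReal,
      zero_mul]
  · exact fun i _ => (hasLaw_eval_gaussianRow i).hasGaussianLaw.integrable.mul_const _

lemma covariance_gaussianRow_linear (x y : ι → ℝ) :
    cov[fun g => ∑ i, g i * x i, fun g => ∑ i, g i * y i; gaussianRow ι] = ∑ i, x i * y i := by
  classical
  have memLp_eval (i : ι) : MemLp (fun g : ι → ℝ => g i) 2 (gaussianRow ι) :=
    (hasLaw_eval_gaussianRow i).hasGaussianLaw.memLp_two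
  have cov_eval (i j : ι) : cov[fun g : ι → ℝ => g i, fun g => g j; gaussianRow ι] =
      if i = j then 1 else 0 := by
    split_ifs with hij
    · subst hij
      rw [covariance_self (memLp_eval i).aemeasurable, (hasLaw_eval_gaussianRow i).variance_eq,
        variance_id_gaussianReal, NNReal.coe_one]
    · exact (iIndepFun_eval_gaussianRow.indepFun hij).covariance_eq_zero (memLp_eval i)
        (memLp_eval j)
  rw [covariance_fun_sum_fun_sum (fun i => (memLp_eval i).mul_const _)
    (fun i => (memLp_eval i).mul_const _)]
  simp [covariance_mul_const_left, covariance_mul_const_right, cov_eval]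

lemma variance_gaussianRow_linear (x : ι → ℝ) :
    Var[fun g => ∑ i, g i * x i; gaussianRow ι] = ∑ i, x i * x i := by
  rw [← covariance_self (hasGaussianLaw_gaussianRow_linear_pair x x).fst.aemeasurable,
    covariance_gaussianRow_linear]

end GaussianRow

section PairChain

lemma chi_mul_chi (a b : Bool) : chi a * chi b = if a = b then 1 else -1 := by
  cases a <;> cases b <;> norm_num [chi]

/-- The normalised inner product of two points of `{-1,1}^n` at Hamming distance `d`. -/
def overlap (n d : ℕ) : ℝ := 1 - 2 * d / n

/-- The probability that a Gaussian layer separates a given coordinate of two points of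
`{-1,1}^n` at Hamming distance `d`. -/
def flipProb (n d : ℕ) : ℝ := Real.arccos (overlap n d) / Real.pi

lemma flipProb_nonneg (n d : ℕ) : 0 ≤ flipProb n d :=
  div_nonneg (Real.arccos_nonneg _) Real.pi_pos.le

lemma flipProb_le_one (n d : ℕ) : flipProb n d ≤ 1 :=
  div_le_one_of_le₀ (Real.arccos_le_pi _) Real.pi_pos.le

lemma overlap_mem_Icc {n d : ℕ} (hd : d ≤ n) : overlap n d ∈ Set.Icc (-1 : ℝ) 1 := by
  have h₀ : (0 : ℝ) ≤ d / n := by positivity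
  have h₁ : (d : ℝ) / n ≤ 1 := div_le_one_of_le₀ (by exact_mod_cast hd) (by positivity)
  rw [overlap, mul_div_assoc]
  constructor <;> linarith

lemma hammingDist_le {n : ℕ} (x y : Fin n → Bool) : hammingDist x y ≤ n := by
  simpa using hammingDist_le_card_fintype (x := x) (y := y)

variable {n : ℕ}

lemma sum_chi_mul_chi [NeZero n] (x y : Fin n → Bool) :
    ∑ j, chi (x j) * chi (y j) = n * overlap n (hammingDist x y) := by
  have hn : (n : ℝ) ≠ 0 := NeZero.ne _
  have indicator_form (j : Fin n) :
      chi (x j) * chi (y j) = 1 - 2 * if x j ≠ y j then 1 else 0 := by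
    rw [chi_mul_chi]
    by_cases h : x j = y j <;> norm_num [h]
  rw [Finset.sum_congr rfl fun j _ => indicator_form j, sum_sub_distrib, ← mul_sum, sum_boole,
    overlap, hammingDist]
  simp only [sum_const, card_univ, Fintype.card_fin, nsmul_eq_mul, mul_one]
  field_simp

theorem gaussianRow_real_decide_pos [NeZero n] (x y : Fin n → Bool) (α β : Bool) :
    (gaussianRow (Fin n)).real {g | decide (0 < ∑ j, g j * chi (x j)) = α ∧
      decide (0 < ∑ j, g j * chi (y j)) = β} =
      1 / 2 * if α = β then 1 - flipProb n (hammingDist x y) else flipProb n (hammingDist x y) := by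
  have var_chi (z : Fin n → Bool) :
      Var[fun g => ∑ j, g j * chi (z j); gaussianRow (Fin n)] = n := by
    rw [variance_gaussianRow_linear]
    simp [chi_mul_chi]
  exact measureReal_decide_pos_of_hasGaussianLaw (hasGaussianLaw_gaussianRow_linear_pair _ _)
    (integral_gaussianRow_linear _) (integral_gaussianRow_linear _)
    (Nat.cast_pos.2 (NeZero.pos n)) (overlap_mem_Icc (hammingDist_le x y)) (var_chi x) (var_chi y)
    ((covariance_gaussianRow_linear _ _).trans (sum_chi_mul_chi x y)) α β

/-- One layer of the sign network, on Boolean vectors. -/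
def signLayer (θ : Fin n → Fin n → ℝ) (x : Fin n → Bool) : Fin n → Bool :=
  fun i => decide (0 < ∑ j, θ i j * chi (x j))

/-- The sign network whose layers are listed from input to output, on Boolean vectors. -/
def signNet (l : List (Fin n → Fin n → ℝ)) (x : Fin n → Bool) : Fin n → Bool :=
  l.foldl (fun y θ => signLayer θ y) x

lemma foldl_layerMap_chi (l : List (Fin n → Fin n → ℝ)) (x : Fin n → Bool) :
    l.foldl (fun y θ => layerMap n θ y) (fun j => chi (x j)) = fun j => chi (signNet l x j) := by
  induction l generalizing x with
  | nil => rfl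
  | cons θ l ih =>
    have layer : layerMap n θ (fun j => chi (x j)) = fun j => chi (signLayer θ x j) := by
      funext i
      simp [layerMap, sgn, signLayer, chi]
    rw [List.foldl_cons, layer, ih]
    rfl

lemma boolOut_eq_signNet (T : ℕ) (h : (Fin n → Bool) → Bool) (Θ : Fin T → Fin n → Fin n → ℝ)
    (ω : Fin n → Bool) : boolOut n T h Θ ω = h (signNet (List.ofFn Θ) ω) := by
  have decide_chi (b : Bool) : decide (0 < chi b) = b := by cases b <;> norm_num [chi]
  simp only [boolOut, network, foldl_layerMap_chi, decide_chi]

lemma measurable_signLayer (x : Fin n → Bool) : Measurable fun θ => signLayer θ x := by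
  refine measurable_pi_lambda _ fun i => measurable_to_bool ?_
  have preimage_true : (fun θ => signLayer θ x i) ⁻¹' {true} =
      {θ | 0 < ∑ j, θ i j * chi (x j)} := by
    ext θ
    simp [signLayer]
  rw [preimage_true]
  exact measurableSet_lt (by fun_prop) (by fun_prop)

lemma measurable_signNet_ofFn (T : ℕ) (x : Fin n → Bool) :
    Measurable fun Θ : Fin T → Fin n → Fin n → ℝ => signNet (List.ofFn Θ) x := by
  induction T generalizing x with
  | zero => simpa only [List.ofFn_zero] using measurable_const
  | succ T ih =>
    have uncurried : Measurable fun q : (Fin T → Fin n → Fin n → ℝ) × (Fin n → Bool) =>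
        signNet (List.ofFn q.1) q.2 := measurable_from_prod_countable_left ih
    have first_layer : Measurable fun Θ : Fin (T + 1) → Fin n → Fin n → ℝ =>
        (fun t => Θ (Fin.succ t), signLayer (Θ 0) x) :=
      (by fun_prop : Measurable _).prodMk ((measurable_signLayer x).comp (by fun_prop))
    simpa [Function.comp_def, signNet] using uncurried.comp first_layer

/-- The law of an `n × n` matrix of i.i.d. standard normal weights. -/
abbrev gaussianMatrix (n : ℕ) : Measure (Fin n → Fin n → ℝ) :=
  Measure.pi fun _ => gaussianRow (Fin n)

theorem integral_signLayer [NeZero n] (F : (Fin n → Bool) → (Fin n → Bool) → ℝ)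
    (x y : Fin n → Bool) :
    ∫ θ, F (signLayer θ x) (signLayer θ y) ∂gaussianMatrix n =
      pairMean n (flipProb n (hammingDist x y)) F := by
  have measurable_pair : Measurable fun θ => (signLayer θ x, signLayer θ y) :=
    (measurable_signLayer x).prodMk (measurable_signLayer y)
  have law (a b : Fin n → Bool) :
      ((gaussianMatrix n).map fun θ => (signLayer θ x, signLayer θ y)).real {(a, b)} =
        pairWeight n (flipProb n (hammingDist x y)) a b := by
    have rows : (fun θ => (signLayer θ x, signLayer θ y)) ⁻¹' {(a, b)} =
        Set.univ.pi fun i => {g : Fin n → ℝ | decide (0 < ∑ j, g j * chi (x j)) = a i ∧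
          decide (0 < ∑ j, g j * chi (y j)) = b i} := by
      ext θ
      simp [signLayer, funext_iff, forall_and]
    rw [map_measureReal_apply measurable_pair (measurableSet_singleton _), rows, measureReal_def,
      Measure.pi_pi, ENNReal.toReal_prod]
    simp_rw [← measureReal_def, gaussianRow_real_decide_pos, prod_mul_distrib]
    simp [pairWeight]
  rw [← integral_map (φ := fun θ => (signLayer θ x, signLayer θ y)) (f := fun p => F p.1 p.2)
    measurable_pair.aemeasurable (.of_discrete),
    integral_fintype .of_finite, Fintype.sum_prod_type]
  simp_rw [law, smul_eq_mul, pairMean]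

/-- The transition operator of the Markov chain `(x, y) ↦ (sign(θ x), sign(θ y))` on pairs of
points of the cube, for a fresh Gaussian weight matrix `θ`. -/
def pairStep (n : ℕ) (F : (Fin n → Bool) → (Fin n → Bool) → ℝ) (x y : Fin n → Bool) : ℝ :=
  pairMean n (flipProb n (hammingDist x y)) F

instance isProbabilityMeasure_weightMeas (T : ℕ) : IsProbabilityMeasure (weightMeas n T) := by
  unfold weightMeas
  infer_instance

lemma integrable_signNet (T : ℕ) (F : (Fin n → Bool) → (Fin n → Bool) → ℝ) (x y : Fin n → Bool) :
    Integrable (fun Θ => F (signNet (List.ofFn Θ) x) (signNet (List.ofFn Θ) y))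
      (weightMeas n T) := by
  have measurable_pair : Measurable fun Θ : Fin T → Fin n → Fin n → ℝ =>
      (signNet (List.ofFn Θ) x, signNet (List.ofFn Θ) y) :=
    (measurable_signNet_ofFn T x).prodMk (measurable_signNet_ofFn T y)
  exact Integrable.comp_measurable (g := fun p : (Fin n → Bool) × (Fin n → Bool) => F p.1 p.2)
    .of_finite measurable_pair

theorem integral_signNet [NeZero n] (T : ℕ) (F : (Fin n → Bool) → (Fin n → Bool) → ℝ)
    (x y : Fin n → Bool) :
    ∫ Θ, F (signNet (List.ofFn Θ) x) (signNet (List.ofFn Θ) y) ∂weightMeas n T =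
      (pairStep n)^[T] F x y := by
  induction T generalizing x y with
  | zero => simp [signNet]
  | succ T ih =>
    have split_first := (measurePreserving_piFinSuccAbove
      (fun _ : Fin (T + 1) => gaussianMatrix n) 0).symm
    have integrable := integrable_signNet (T + 1) F x y
    change Integrable _ (Measure.pi fun _ : Fin (T + 1) => gaussianMatrix n) at integrable
    change ∫ Θ, _ ∂(Measure.pi fun _ : Fin (T + 1) => gaussianMatrix n) = _
    rw [← split_first.integrable_comp_emb (MeasurableEquiv.measurableEmbedding _)] at integrable
    rw [← split_first.integral_comp', Function.iterate_succ_apply', pairStep, ← integral_signLayer]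
    refine (integral_prod _ integrable).trans (integral_congr_ae (ae_of_all _ fun θ => ?_))
    simp only [← ih]
    refine integral_congr_ae (ae_of_all _ fun Θ => ?_)
    simp [signNet, MeasurableEquiv.piFinSuccAbove_symm_apply, Fin.insertNthEquiv]

end PairChain

section LayerMean

variable {n : ℕ} {p ε : ℝ} {t : ℕ}

lemma pairWeight_nonneg (hp₀ : 0 ≤ p) (hp₁ : p ≤ 1) (x y : Fin n → Bool) :
    0 ≤ pairWeight n p x y :=
  mul_nonneg (by positivity) (prod_nonneg fun i _ => by split_ifs <;> linarith)

lemma monotone_pairMean (hp₀ : 0 ≤ p) (hp₁ : p ≤ 1) : Monotone (pairMean n p) :=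
  fun _ _ hFG => sum_le_sum fun x _ => sum_le_sum fun y _ =>
    mul_le_mul_of_nonneg_left (hFG x y) (pairWeight_nonneg hp₀ hp₁ x y)

lemma pairMean_add (p : ℝ) (F G : (Fin n → Bool) → (Fin n → Bool) → ℝ) :
    pairMean n p (F + G) = pairMean n p F + pairMean n p G := by
  simp only [pairMean, Pi.add_apply, mul_add, sum_add_distrib]

lemma pairMean_smul (p c : ℝ) (F : (Fin n → Bool) → (Fin n → Bool) → ℝ) :
    pairMean n p (c • F) = c * pairMean n p F := by
  simp only [pairMean, Pi.smul_apply, smul_eq_mul, mul_sum, mul_left_comm]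

lemma pairMean_fst (p : ℝ) (g : (Fin n → Bool) → ℝ) :
    pairMean n p (fun x _ => g x) = unifMean n g := by
  have sum_noise (x : Fin n → Bool) :
      ∑ y : Fin n → Bool, ∏ i, (if x i = y i then 1 - p else p) = 1 := by
    have expand := prod_univ_sum (fun _ : Fin n => (univ : Finset Bool))
      (fun i c => if x i = c then 1 - p else p)
    rw [Fintype.piFinset_univ] at expand
    rw [← expand]
    exact prod_eq_one fun i _ => by cases x i <;> simp
  simp only [pairMean, unifMean, pairWeight, ← sum_mul, ← mul_sum, sum_noise]
  rw [mul_one, one_div, inv_pow, div_eq_inv_mul]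

lemma pairMean_const (n : ℕ) (p c : ℝ) : pairMean n p (fun _ _ => c) = c := by
  rw [pairMean_fst p fun _ => c]
  simp [unifMean]

/-- Expectation of `F` over the pair `(ω_t, (ω^ε)_t)` of hidden states after `t` Gaussian
layers. -/
def layerMean (n : ℕ) (ε : ℝ) (t : ℕ) (F : (Fin n → Bool) → (Fin n → Bool) → ℝ) : ℝ :=
  pairMean n ε ((pairStep n)^[t] F)

lemma layerMean_succ (F : (Fin n → Bool) → (Fin n → Bool) → ℝ) :
    layerMean n ε (t + 1) F = layerMean n ε t (pairStep n F) := rfl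

lemma monotone_layerMean (hε₀ : 0 ≤ ε) (hε₁ : ε ≤ 1) : Monotone (layerMean n ε t) := by
  have monotone_pairStep : Monotone (pairStep n) := fun _ _ hFG _ _ =>
    monotone_pairMean (flipProb_nonneg _ _) (flipProb_le_one _ _) hFG
  exact (monotone_pairMean hε₀ hε₁).comp (monotone_pairStep.iterate t)

lemma layerMean_add (F G : (Fin n → Bool) → (Fin n → Bool) → ℝ) :
    layerMean n ε t (F + G) = layerMean n ε t F + layerMean n ε t G := by
  induction t generalizing F G with
  | zero => exact pairMean_add ε F G
  | succ t ih =>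
    have step : pairStep n (F + G) = pairStep n F + pairStep n G := by
      funext x y
      exact pairMean_add _ F G
    simp only [layerMean_succ, step, ih]

lemma layerMean_smul (c : ℝ) (F : (Fin n → Bool) → (Fin n → Bool) → ℝ) :
    layerMean n ε t (c • F) = c * layerMean n ε t F := by
  induction t generalizing F with
  | zero => exact pairMean_smul ε c F
  | succ t ih =>
    have step : pairStep n (c • F) = c • pairStep n F := by
      funext x y
      exact pairMean_smul _ c F
    simp only [layerMean_succ, step, ih]

lemma layerMean_const (n : ℕ) (ε : ℝ) (t : ℕ) (c : ℝ) : layerMean n ε t (fun _ _ => c) = c := by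
  induction t with
  | zero => exact pairMean_const n ε c
  | succ t ih =>
    have step : pairStep n (fun _ _ => c) = fun _ _ => c := by
      funext x y
      exact pairMean_const n _ c
    rw [layerMean_succ, step, ih]

lemma layerMean_fst (ε : ℝ) (t : ℕ) (g : (Fin n → Bool) → ℝ) :
    layerMean n ε t (fun x _ => g x) = unifMean n g := by
  cases t with
  | zero => exact pairMean_fst ε g
  | succ t =>
    have step : pairStep n (fun x _ => g x) = fun _ _ => unifMean n g := by
      funext x y
      exact pairMean_fst _ g
    rw [layerMean_succ, step, layerMean_const]

lemma sq_layerMean_le (hε₀ : 0 ≤ ε) (hε₁ : ε ≤ 1) (F : (Fin n → Bool) → (Fin n → Bool) → ℝ) :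
    layerMean n ε t F ^ 2 ≤ layerMean n ε t (F ^ 2) := by
  set m := layerMean n ε t F with hm
  have expand : layerMean n ε t ((F ^ 2 + (-2 * m) • F) + fun _ _ => m ^ 2) =
      layerMean n ε t (F ^ 2) - m ^ 2 := by
    rw [layerMean_add, layerMean_add, layerMean_smul, layerMean_const, ← hm]
    ring
  have variance_nonneg : layerMean n ε t (fun _ _ => 0) ≤
      layerMean n ε t ((F ^ 2 + (-2 * m) • F) + fun _ _ => m ^ 2) :=
    monotone_layerMean hε₀ hε₁ fun x y => by
      simp only [Pi.add_apply, Pi.pow_apply, Pi.smul_apply, smul_eq_mul]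
      nlinarith [sq_nonneg (F x y - m)]
  rw [layerMean_const, expand] at variance_nonneg
  linarith

lemma integral_pairMean_signNet [NeZero n] (T : ℕ) (ε : ℝ)
    (F : (Fin n → Bool) → (Fin n → Bool) → ℝ) :
    ∫ Θ, pairMean n ε (fun x y => F (signNet (List.ofFn Θ) x) (signNet (List.ofFn Θ) y))
      ∂weightMeas n T = layerMean n ε T F := by
  have integrable (x y : Fin n → Bool) :=
    (integrable_signNet T F x y).const_mul (pairWeight n ε x y)
  simp only [pairMean, layerMean]
  rw [integral_finsetSum _ fun x _ => integrable_finsetSum _ fun y _ => integrable x y]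
  refine sum_congr rfl fun x _ => ?_
  rw [integral_finsetSum _ fun y _ => integrable x y]
  exact sum_congr rfl fun y _ => by rw [integral_const_mul, integral_signNet]

theorem annealedCov_eq_layerMean [NeZero n] (T : ℕ) (ε : ℝ) (h : (Fin n → Bool) → Bool) :
    annealedCov n T ε h =
      layerMean n ε T (fun x y => chi (h x) * chi (h y)) - unifMean n (fun x => chi (h x)) ^ 2 := by
  have mean : ∫ Θ, unifMean n (netOut n T h Θ) ∂weightMeas n T =
      unifMean n fun x => chi (h x) := by
    simp only [← pairMean_fst ε, netOut, boolOut_eq_signNet]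
    rw [integral_pairMean_signNet T ε fun x _ => chi (h x), layerMean_fst, pairMean_fst]
  simp only [annealedCov, mean, netOut, boolOut_eq_signNet]
  rw [integral_pairMean_signNet T ε fun x y => chi (h x) * chi (h y)]

end LayerMean

section Walsh

variable {n : ℕ}

/-- The Walsh character `∏_{i ∈ S} x_i` of the cube `{-1,1}^n`. -/
def walsh (S : Finset (Fin n)) (x : Fin n → Bool) : ℝ := ∏ i ∈ S, chi (x i)

lemma pairWeight_eq_sum_walsh (p : ℝ) (x y : Fin n → Bool) :
    pairWeight n p x y = (1 / 2) ^ n * (1 / 2) ^ n *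
      ∑ S : Finset (Fin n), (1 - 2 * p) ^ #S * (walsh S x * walsh S y) := by
  have affine_form (i : Fin n) : (if x i = y i then 1 - p else p) =
      1 / 2 * (1 + (1 - 2 * p) * (chi (x i) * chi (y i))) := by
    rw [chi_mul_chi]
    split_ifs <;> ring
  rw [pairWeight, prod_congr rfl fun i _ => affine_form i, prod_mul_distrib, prod_one_add]
  simp only [prod_mul_distrib, prod_const, powerset_univ, walsh, card_univ, Fintype.card_fin]
  ring

lemma pairMean_mul_eq_sum_walsh (p : ℝ) (g : (Fin n → Bool) → ℝ) :
    pairMean n p (fun x y => g x * g y) =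
      ∑ S : Finset (Fin n), (1 - 2 * p) ^ #S * unifMean n (fun x => g x * walsh S x) ^ 2 := by
  have sq_coeff (S : Finset (Fin n)) : unifMean n (fun x => g x * walsh S x) ^ 2 =
      (1 / 2) ^ n * (1 / 2) ^ n * ∑ x, ∑ y, (g x * walsh S x) * (g y * walsh S y) := by
    rw [unifMean, ← sum_mul_sum, div_eq_mul_inv, one_div, inv_pow]
    ring
  simp_rw [sq_coeff, pairMean, pairWeight_eq_sum_walsh, mul_sum, sum_mul]
  conv_lhs => enter [2, x]; rw [sum_comm]
  rw [sum_comm]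
  refine sum_congr rfl fun S _ => sum_congr rfl fun x _ => sum_congr rfl fun y _ => ?_
  ring

lemma noiseCov_eq_sum_walsh (p : ℝ) (g : (Fin n → Bool) → ℝ) :
    noiseCov n p g = ∑ S ∈ univ.erase (∅ : Finset (Fin n)),
      (1 - 2 * p) ^ #S * unifMean n (fun x => g x * walsh S x) ^ 2 := by
  rw [noiseCov, pairMean_mul_eq_sum_walsh, ← add_sum_erase univ _ (mem_univ ∅)]
  simp [walsh]

lemma abs_noiseCov_le {p : ℝ} (hp₀ : 0 ≤ p) (hp₁ : p ≤ 1) (g : (Fin n → Bool) → ℝ) :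
    |noiseCov n p g| ≤ |1 - 2 * p| * noiseCov n 0 g := by
  have hρ : |1 - 2 * p| ≤ 1 := abs_le.2 ⟨by linarith, by linarith⟩
  rw [noiseCov_eq_sum_walsh, noiseCov_eq_sum_walsh, mul_sum]
  refine (abs_sum_le_sum_abs _ _).trans (sum_le_sum fun S hS => ?_)
  rw [mul_zero, sub_zero, one_pow, one_mul, abs_mul, abs_pow,
    abs_of_nonneg (sq_nonneg (unifMean n _))]
  gcongr
  exact pow_le_of_le_one (abs_nonneg _) hρ (card_ne_zero.2 (nonempty_iff_ne_empty.2
    (ne_of_mem_erase hS)))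

lemma pairWeight_zero_of_ne {x y : Fin n → Bool} (hxy : x ≠ y) : pairWeight n 0 x y = 0 := by
  obtain ⟨i, hi⟩ := Function.ne_iff.1 hxy
  rw [pairWeight, prod_eq_zero (mem_univ i) (if_neg hi), mul_zero]

lemma noiseCov_zero_chi_le_one (h : (Fin n → Bool) → Bool) :
    noiseCov n 0 (fun x => chi (h x)) ≤ 1 := by
  have second_moment : pairMean n 0 (fun x y => chi (h x) * chi (h y)) = 1 := by
    rw [← pairMean_const n 0 1]
    refine sum_congr rfl fun x _ => sum_congr rfl fun y _ => ?_
    by_cases hxy : x = y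
    · simp [hxy, chi_mul_chi]
    · simp [pairWeight_zero_of_ne hxy]
  rw [noiseCov, second_moment]
  linarith [sq_nonneg (unifMean n fun x => chi (h x))]

lemma sq_noiseCov_chi_le {p : ℝ} (hp₀ : 0 ≤ p) (hp₁ : p ≤ 1) (h : (Fin n → Bool) → Bool) :
    noiseCov n p (fun x => chi (h x)) ^ 2 ≤ (1 - 2 * p) ^ 2 :=
  sq_le_sq.2 ((abs_noiseCov_le hp₀ hp₁ _).trans
    (mul_le_of_le_one_right (abs_nonneg _) (noiseCov_zero_chi_le_one h)))

theorem sq_annealedCov_succ_le [NeZero n] {ε : ℝ} (hε₀ : 0 ≤ ε) (hε₁ : ε ≤ 1) (t : ℕ)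
    (h : (Fin n → Bool) → Bool) :
    annealedCov n (t + 1) ε h ^ 2 ≤
      layerMean n ε t fun x y => (1 - 2 * flipProb n (hammingDist x y)) ^ 2 := by
  set g : (Fin n → Bool) → ℝ := fun x => chi (h x)
  have last_layer : pairStep n (fun x y => g x * g y) =
      (fun x y => noiseCov n (flipProb n (hammingDist x y)) g) + fun _ _ => unifMean n g ^ 2 := by
    funext x y
    exact (sub_add_cancel _ _).symm
  calc annealedCov n (t + 1) ε h ^ 2
      = layerMean n ε t (fun x y => noiseCov n (flipProb n (hammingDist x y)) g) ^ 2 := by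
        rw [annealedCov_eq_layerMean, layerMean_succ, last_layer, layerMean_add, layerMean_const,
          add_sub_cancel_right]
    _ ≤ layerMean n ε t ((fun x y => noiseCov n (flipProb n (hammingDist x y)) g) ^ 2) :=
        sq_layerMean_le hε₀ hε₁ _
    _ ≤ _ := monotone_layerMean hε₀ hε₁ fun x y =>
        sq_noiseCov_chi_le (flipProb_nonneg _ _) (flipProb_le_one _ _) h

end Walsh

section FlipProb

lemma arcsin_mul_le_mul_arcsin {r s : ℝ} (hr : 0 ≤ r) (hrs : r ≤ s) (hs : s ≤ 1) :
    Real.arcsin r * s ≤ Real.arcsin s * r := by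
  rcases hr.eq_or_lt with rfl | hr
  · simp
  have hs₀ : 0 < Real.arcsin s := Real.arcsin_pos.2 (hr.trans_le hrs)
  have hquot : Real.arcsin r / Real.arcsin s ≤ 1 :=
    (div_le_one hs₀).2 (Real.monotone_arcsin hrs)
  have chord := strictConcaveOn_sin_Icc.concaveOn.2 (Set.left_mem_Icc.2 Real.pi_pos.le)
    (show Real.arcsin s ∈ Set.Icc 0 Real.pi from
      ⟨hs₀.le, (Real.arcsin_le_pi_div_two s).trans (by linarith [Real.pi_pos])⟩)
    (sub_nonneg.2 hquot) (div_nonneg (Real.arcsin_nonneg.2 hr.le) hs₀.le) (sub_add_cancel _ _)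
  simp only [smul_eq_mul, Real.sin_zero, mul_zero, zero_add, div_mul_cancel₀ _ hs₀.ne',
    Real.sin_arcsin (by linarith : -1 ≤ s) hs,
    Real.sin_arcsin (by linarith : -1 ≤ r) (hrs.trans hs)] at chord
  rwa [div_mul_eq_mul_div, div_le_iff₀ hs₀, mul_comm r] at chord

lemma abs_arcsin_mul_le {r s : ℝ} (hrs : |r| ≤ s) (hs : s ≤ 1) :
    |Real.arcsin r| * s ≤ Real.arcsin s * |r| := by
  have abs_arcsin : |Real.arcsin r| = Real.arcsin |r| := by
    rcases le_total 0 r with hr | hr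
    · rw [abs_of_nonneg hr, abs_of_nonneg (Real.arcsin_nonneg.2 hr)]
    · rw [abs_of_nonpos hr, abs_of_nonpos (Real.arcsin_nonpos.2 hr), Real.arcsin_neg]
  rw [abs_arcsin]
  exact arcsin_mul_le_mul_arcsin (abs_nonneg r) hrs hs

lemma one_sub_two_mul_flipProb (n d : ℕ) :
    1 - 2 * flipProb n d = 2 / Real.pi * Real.arcsin (overlap n d) := by
  rw [flipProb, Real.arccos]
  field_simp
  ring

lemma sq_one_sub_two_mul_flipProb_le {n d : ℕ} (hd : d ≤ n) :
    (1 - 2 * flipProb n d) ^ 2 ≤ overlap n d ^ 2 := by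
  have bound := abs_arcsin_mul_le (abs_le.2 (overlap_mem_Icc hd)) le_rfl
  rw [mul_one, Real.arcsin_one] at bound
  rw [sq_le_sq, one_sub_two_mul_flipProb, abs_mul, abs_of_pos (div_pos two_pos Real.pi_pos)]
  calc 2 / Real.pi * |Real.arcsin (overlap n d)|
      ≤ 2 / Real.pi * (Real.pi / 2 * |overlap n d|) := by gcongr
    _ = |overlap n d| := by field_simp

theorem exists_sq_one_sub_two_mul_flipProb_le_mul {α : ℝ} (hα₀ : 0 < α) (hα : α < 1 / 2) :
    ∃ γ : ℝ, 3 / 4 ≤ γ ∧ γ < 1 ∧ ∀ n d : ℕ, |overlap n d| ≤ 1 - 2 * α →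
      (1 - 2 * flipProb n d) ^ 2 ≤ γ * overlap n d ^ 2 := by
  set s := 1 - 2 * α with hs
  have hs₀ : 0 < s := by rw [hs]; linarith
  set c := 2 / Real.pi * Real.arcsin s / s
  have hc₀ : 0 ≤ c := by
    have := Real.arcsin_nonneg.2 hs₀.le
    positivity
  have hc₁ : c < 1 := by
    have chord := Real.mul_lt_sin (Real.arcsin_pos.2 hs₀)
      (Real.arcsin_lt_pi_div_two.2 (by linarith))
    rw [Real.sin_arcsin (by linarith) (by linarith)] at chord
    exact (div_lt_one hs₀).2 chord
  have contraction (n d : ℕ) (h : |overlap n d| ≤ s) :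
      (1 - 2 * flipProb n d) ^ 2 ≤ c ^ 2 * overlap n d ^ 2 := by
    rw [← mul_pow, sq_le_sq, one_sub_two_mul_flipProb, abs_mul, abs_mul, abs_of_nonneg hc₀,
      abs_of_pos (div_pos two_pos Real.pi_pos)]
    calc 2 / Real.pi * |Real.arcsin (overlap n d)|
        ≤ 2 / Real.pi * (Real.arcsin s * |overlap n d| / s) := by
          gcongr
          exact (le_div_iff₀ hs₀).2 (abs_arcsin_mul_le h (by linarith))
      _ = c * |overlap n d| := by ring
  refine ⟨max (3 / 4) (c ^ 2), le_max_left _ _,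
    max_lt (by norm_num) (pow_lt_one₀ hc₀ hc₁ two_ne_zero), fun n d h => ?_⟩
  exact (contraction n d h).trans (by gcongr; exact le_max_right _ _)

-- Near distance `0` the flip probability is of order `√(d / n)`, so it exceeds any multiple
-- of `d / n`.
lemma min_le_flipProb {n d : ℕ} (hd : d ≤ n) : min (4 * (d / n : ℝ)) (1 / 10) ≤ flipProb n d := by
  have cos_flipProb : Real.cos (Real.pi * flipProb n d) = 1 - 2 * (d / n : ℝ) := by
    rw [flipProb, mul_div_cancel₀ _ Real.pi_ne_zero, Real.cos_arccos (overlap_mem_Icc hd).1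
      (overlap_mem_Icc hd).2, overlap, mul_div_assoc]
  have cos_lower := Real.one_sub_sq_div_two_le_cos (x := Real.pi * flipProb n d)
  rw [cos_flipProb] at cos_lower
  have pi_sq_lt : Real.pi ^ 2 < 10 := by nlinarith [Real.pi_lt_d2, Real.pi_pos]
  set x : ℝ := d / n
  have hx : 0 ≤ x := by positivity
  have sq_lower : 2 / 5 * x ≤ flipProb n d ^ 2 := by
    rw [mul_pow] at cos_lower
    nlinarith [sq_nonneg (flipProb n d)]
  have sq_min_le : min (4 * x) (1 / 10) ^ 2 ≤ 2 / 5 * x := by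
    have hmin : 0 ≤ min (4 * x) (1 / 10) := le_min (by positivity) (by norm_num)
    nlinarith [min_le_left (4 * x) (1 / 10), min_le_right (4 * x) (1 / 10)]
  exact le_of_sq_le_sq (sq_min_le.trans sq_lower) (flipProb_nonneg n d)

lemma overlap_sub {n d : ℕ} [NeZero n] (hd : d ≤ n) : overlap n (n - d) = -overlap n d := by
  have hn : (n : ℝ) ≠ 0 := NeZero.ne _
  rw [overlap, overlap, Nat.cast_sub hd]
  field_simp
  ring

lemma flipProb_sub {n d : ℕ} [NeZero n] (hd : d ≤ n) : flipProb n (n - d) = 1 - flipProb n d := by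
  rw [flipProb, overlap_sub hd, Real.arccos_neg, sub_div, div_self Real.pi_ne_zero, flipProb]

end FlipProb

section HammingDist

variable {n : ℕ} {p : ℝ}

lemma sum_comp_hammingDist (x : Fin n → Bool) (φ : ℕ → ℝ) :
    ∑ y, φ (hammingDist x y) = ∑ k ∈ range (n + 1), (n.choose k : ℝ) * φ k := by
  have by_card := sum_powerset_apply_card φ (x := (univ : Finset (Fin n)))
  simp only [powerset_univ, card_univ, Fintype.card_fin, nsmul_eq_mul] at by_card
  rw [← by_card]
  refine sum_bij' (fun y _ => univ.filter fun j => x j ≠ y j)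
    (fun S _ j => if j ∈ S then !x j else x j) (by simp) (by simp)
    (fun y _ => ?_) (fun S _ => ?_) fun y _ => rfl
  · funext j
    cases hx : x j <;> cases hy : y j <;> simp [hx, hy]
  · ext j
    by_cases hj : j ∈ S <;> simp [hj]

lemma eval_bernsteinPolynomial (n k : ℕ) (p : ℝ) :
    (bernsteinPolynomial ℝ n k).eval p = n.choose k * p ^ k * (1 - p) ^ (n - k) := by
  simp [bernsteinPolynomial]

lemma pairWeight_eq_hammingDist (p : ℝ) (x y : Fin n → Bool) :
    pairWeight n p x y =
      (1 / 2) ^ n * (p ^ hammingDist x y * (1 - p) ^ (n - hammingDist x y)) := by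
  have card_agree : #{j | x j = y j} = n - hammingDist x y := by
    have split := card_filter_add_card_filter_not (s := (univ : Finset (Fin n))) fun j => x j = y j
    rw [card_univ, Fintype.card_fin] at split
    exact Nat.eq_sub_of_add_eq split
  rw [pairWeight, prod_ite, prod_const, prod_const, card_agree, mul_comm (p ^ _)]
  rfl

theorem pairMean_comp_hammingDist (p : ℝ) (G : ℕ → ℝ) :
    pairMean n p (fun x y => G (hammingDist x y)) =
      ∑ k ∈ range (n + 1), (bernsteinPolynomial ℝ n k).eval p * G k := by
  have two_pow : (2 : ℝ) ^ n * (1 / 2) ^ n = 1 := by rw [← mul_pow]; norm_num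
  simp_rw [pairMean, pairWeight_eq_hammingDist]
  rw [sum_congr rfl fun x _ => sum_comp_hammingDist x
    fun k => (1 / 2) ^ n * (p ^ k * (1 - p) ^ (n - k)) * G k, sum_const, card_univ,
    Fintype.card_fun, Fintype.card_bool, Fintype.card_fin, nsmul_eq_mul, mul_sum]
  refine sum_congr rfl fun k _ => ?_
  rw [eval_bernsteinPolynomial]
  push_cast
  linear_combination (n.choose k : ℝ) * (p ^ k * (1 - p) ^ (n - k)) * G k * two_pow

lemma pairMean_comp_sub_hammingDist (p : ℝ) (G : ℕ → ℝ) :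
    pairMean n p (fun x y => G (n - hammingDist x y)) =
      pairMean n (1 - p) (fun x y => G (hammingDist x y)) := by
  rw [pairMean_comp_hammingDist p fun k => G (n - k), pairMean_comp_hammingDist,
    ← sum_range_reflect]
  refine sum_congr rfl fun k hk => ?_
  have hk : k ≤ n := Nat.lt_succ_iff.1 (mem_range.1 hk)
  rw [Nat.add_sub_cancel, Nat.sub_sub_self hk, ← bernsteinPolynomial.flip ℝ n k hk]
  simp

lemma pairMean_exp_neg_hammingDist_le (hp₀ : 0 ≤ p) (hp₁ : p ≤ 1) :
    pairMean n p (fun x y => Real.exp (-hammingDist x y)) ≤ Real.exp (-(n * p) / 2) := by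
  have generating : pairMean n p (fun x y => Real.exp (-hammingDist x y)) =
      (p * Real.exp (-1) + (1 - p)) ^ n := by
    rw [pairMean_comp_hammingDist p fun k => Real.exp (-k), add_pow]
    refine sum_congr rfl fun k _ => ?_
    rw [eval_bernsteinPolynomial, mul_pow, ← Real.exp_nat_mul, mul_neg_one]
    ring
  have exp_neg_one_le : Real.exp (-1) ≤ 1 / 2 := by linarith [Real.exp_neg_one_lt_half]
  have base_le : p * Real.exp (-1) + (1 - p) ≤ Real.exp (-p / 2) := by
    nlinarith [Real.add_one_le_exp (-p / 2)]
  calc pairMean n p (fun x y => Real.exp (-hammingDist x y))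
      = (p * Real.exp (-1) + (1 - p)) ^ n := generating
    _ ≤ Real.exp (-p / 2) ^ n :=
        pow_le_pow_left₀ (add_nonneg (by positivity) (sub_nonneg.2 hp₁)) base_le n
    _ = Real.exp (-(n * p) / 2) := by
        rw [← Real.exp_nat_mul]
        ring_nf

lemma pairMean_inv_hammingDist_add_one_le (hp₀ : 0 < p) (hp₁ : p ≤ 1) :
    pairMean n p (fun x y => ((hammingDist x y : ℝ) + 1)⁻¹) ≤ 1 / ((n + 1) * p) := by
  have shift (k : ℕ) : (bernsteinPolynomial ℝ n k).eval p * ((k : ℝ) + 1)⁻¹ * ((n + 1) * p) =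
      (bernsteinPolynomial ℝ (n + 1) (k + 1)).eval p := by
    have absorb : ((n : ℝ) + 1) * n.choose k = (n + 1).choose (k + 1) * ((k : ℝ) + 1) := by
      exact_mod_cast Nat.add_one_mul_choose_eq n k
    rw [eval_bernsteinPolynomial, eval_bernsteinPolynomial, Nat.add_sub_add_right, pow_succ]
    field_simp
    linear_combination (1 - p) ^ (n - k) * absorb
  have total := congrArg (Polynomial.eval p) (bernsteinPolynomial.sum ℝ (n + 1))
  rw [Polynomial.eval_finsetSum, sum_range_succ', Polynomial.eval_one] at total
  have first_nonneg : 0 ≤ (bernsteinPolynomial ℝ (n + 1) 0).eval p := by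
    have := sub_nonneg.2 hp₁
    rw [eval_bernsteinPolynomial]
    positivity
  rw [le_div_iff₀ (by positivity), pairMean_comp_hammingDist p fun k => ((k : ℝ) + 1)⁻¹, sum_mul,
    sum_congr rfl fun k _ => shift k]
  linarith

lemma pairMean_inv_hammingDist_le (hp₀ : 0 < p) (hp₁ : p ≤ 1) :
    pairMean n p (fun x y => (hammingDist x y : ℝ)⁻¹) ≤ 2 / ((n + 1) * p) := by
  have inv_le (k : ℕ) : (k : ℝ)⁻¹ ≤ 2 * ((k : ℝ) + 1)⁻¹ := by
    rcases Nat.eq_zero_or_pos k with rfl | hk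
    · norm_num
    · have : (1 : ℝ) ≤ k := by exact_mod_cast hk
      rw [← div_eq_mul_inv, inv_eq_one_div, div_le_div_iff₀ (by positivity) (by positivity)]
      linarith
  calc pairMean n p (fun x y => (hammingDist x y : ℝ)⁻¹)
      ≤ pairMean n p ((2 : ℝ) • fun x y => ((hammingDist x y : ℝ) + 1)⁻¹) :=
        monotone_pairMean hp₀.le hp₁ fun x y => inv_le _
    _ ≤ 2 * (1 / ((n + 1) * p)) := by
        rw [pairMean_smul]
        gcongr
        exact pairMean_inv_hammingDist_add_one_le hp₀ hp₁
    _ = 2 / ((n + 1) * p) := by ring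

lemma pairMean_sq_overlap_le [NeZero n] (p : ℝ) :
    pairMean n p (fun x y => overlap n (hammingDist x y) ^ 2) ≤ (1 - 2 * p) ^ 2 + 1 / n := by
  have hn : (n : ℝ) ≠ 0 := NeZero.ne _
  have total := congrArg (Polynomial.eval p) (bernsteinPolynomial.sum ℝ n)
  have mean := congrArg (Polynomial.eval p) (bernsteinPolynomial.sum_smul ℝ n)
  have variance := congrArg (Polynomial.eval p) (bernsteinPolynomial.variance ℝ n)
  simp only [Polynomial.eval_finsetSum, Polynomial.eval_mul, Polynomial.eval_pow,
    Polynomial.eval_sub, Polynomial.eval_X, Polynomial.eval_one, Polynomial.eval_natCast,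
    nsmul_eq_mul] at total mean variance
  calc pairMean n p (fun x y => overlap n (hammingDist x y) ^ 2)
      = (1 - 2 * p) * (1 + 2 * p) * ∑ k ∈ range (n + 1), (bernsteinPolynomial ℝ n k).eval p -
          4 * (1 - 2 * p) / n * ∑ k ∈ range (n + 1), k * (bernsteinPolynomial ℝ n k).eval p +
          4 / n ^ 2 *
            ∑ k ∈ range (n + 1), (n * p - k) ^ 2 * (bernsteinPolynomial ℝ n k).eval p := by
        rw [pairMean_comp_hammingDist p fun k => overlap n k ^ 2]
        simp only [mul_sum, ← sum_add_distrib, ← sum_sub_distrib]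
        refine sum_congr rfl fun k _ => ?_
        rw [overlap]
        field_simp
        ring
    _ = (1 - 2 * p) ^ 2 + 4 * p * (1 - p) / n := by
        rw [total, mean, variance]
        field_simp
        ring
    _ ≤ (1 - 2 * p) ^ 2 + 1 / n := by
        gcongr
        nlinarith [sq_nonneg (1 - 2 * p)]

end HammingDist

section Potentials

variable {n : ℕ}

/-- The sum of a potential `G` over the Hamming distances `d` from `x` to `y` and `n - d` from `x`
to the antipode of `y`. It is symmetric between the two absorbing distances `0` and `n` of the pair
chain. -/
def endpointSum (G : ℕ → ℝ) (x y : Fin n → Bool) : ℝ :=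
  G (hammingDist x y) + G (n - hammingDist x y)

/-- The potential `e^{-d} + e^{-(n-d)}`, which is at least one on the absorbing pairs. -/
def expPotential (n : ℕ) : (Fin n → Bool) → (Fin n → Bool) → ℝ :=
  endpointSum fun k => Real.exp (-k)

/-- The potential `1/d + 1/(n-d)`, where `1/0 = 0`: absorbed pairs are left to `expPotential`. -/
def invPotential (n : ℕ) : (Fin n → Bool) → (Fin n → Bool) → ℝ :=
  endpointSum fun k => (k : ℝ)⁻¹

/-- The squared normalised inner product of two points of the cube. -/
def sqOverlap (n : ℕ) (x y : Fin n → Bool) : ℝ := overlap n (hammingDist x y) ^ 2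

lemma expPotential_nonneg (x y : Fin n → Bool) : 0 ≤ expPotential n x y := by
  simp only [expPotential, endpointSum]
  positivity

lemma invPotential_nonneg (x y : Fin n → Bool) : 0 ≤ invPotential n x y := by
  simp only [invPotential, endpointSum]
  positivity

lemma sqOverlap_le_one (x y : Fin n → Bool) : sqOverlap n x y ≤ 1 :=
  (sq_le_one_iff_abs_le_one _).2 (abs_le.2 (overlap_mem_Icc (hammingDist_le x y)))

lemma pairMean_endpointSum (p : ℝ) (G : ℕ → ℝ) :
    pairMean n p (endpointSum G) = pairMean n p (fun x y => G (hammingDist x y)) +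
      pairMean n (1 - p) (fun x y => G (hammingDist x y)) := by
  rw [← pairMean_comp_sub_hammingDist, ← pairMean_add]
  rfl

lemma pairStep_endpointSum_le [NeZero n] {G : ℕ → ℝ} {a c : ℝ}
    (drift : ∀ d ≤ n,
      pairMean n (flipProb n d) (fun x y => G (hammingDist x y)) ≤ a * G d + c)
    (x y : Fin n → Bool) : pairStep n (endpointSum G) x y ≤ a * endpointSum G x y + 2 * c := by
  have near := drift _ (hammingDist_le x y)
  have far := drift (n - hammingDist x y) (Nat.sub_le _ _)
  rw [flipProb_sub (hammingDist_le x y)] at far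
  rw [pairStep, pairMean_endpointSum, endpointSum]
  linarith

lemma pairMean_flipProb_exp_neg_le [NeZero n] {d : ℕ} (hd : d ≤ n) :
    pairMean n (flipProb n d) (fun x y => Real.exp (-hammingDist x y)) ≤
      Real.exp (-d) + Real.exp (-n / 20) := by
  have hn : (0 : ℝ) < n := Nat.cast_pos.2 (NeZero.pos n)
  refine (pairMean_exp_neg_hammingDist_le (flipProb_nonneg n d) (flipProb_le_one n d)).trans ?_
  rcases min_le_iff.1 (min_le_flipProb hd) with near | far
  · rw [← mul_div_assoc, div_le_iff₀ hn] at near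
    have : Real.exp (-(n * flipProb n d) / 2) ≤ Real.exp (-d) :=
      Real.exp_le_exp.2 (by linarith [(Nat.cast_nonneg d : (0 : ℝ) ≤ d)])
    linarith [Real.exp_pos (-n / 20)]
  · have : Real.exp (-(n * flipProb n d) / 2) ≤ Real.exp (-n / 20) :=
      Real.exp_le_exp.2 (by nlinarith)
    linarith [Real.exp_pos (-d)]

lemma pairMean_flipProb_inv_le [NeZero n] {d : ℕ} (hd : d ≤ n) :
    pairMean n (flipProb n d) (fun x y => (hammingDist x y : ℝ)⁻¹) ≤
      1 / 2 * (d : ℝ)⁻¹ + 20 / n := by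
  have hn : (0 : ℝ) < n := Nat.cast_pos.2 (NeZero.pos n)
  rcases Nat.eq_zero_or_pos d with rfl | hd₀
  · have flipProb_zero : flipProb n 0 = 0 := by simp [flipProb, overlap]
    rw [flipProb_zero, pairMean_comp_hammingDist 0 fun k => (k : ℝ)⁻¹,
      sum_eq_zero fun k _ => by cases k <;> simp [bernsteinPolynomial.eval_at_0]]
    positivity
  have : (0 : ℝ) < d := by exact_mod_cast hd₀
  have flipProb_pos : 0 < flipProb n d :=
    (lt_min (by positivity) (by norm_num)).trans_le (min_le_flipProb hd)
  refine (pairMean_inv_hammingDist_le flipProb_pos (flipProb_le_one n d)).trans ?_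
  rcases min_le_iff.1 (min_le_flipProb hd) with near | far
  · have : 2 / ((n + 1) * flipProb n d) ≤ 2 / (n * (4 * (d / n : ℝ))) := by
      gcongr
      linarith
    have : 2 / (n * (4 * (d / n : ℝ))) = 1 / 2 * (d : ℝ)⁻¹ := by
      field_simp
      norm_num
    linarith [show 0 ≤ 20 / (n : ℝ) by positivity]
  · have : 2 / ((n + 1) * flipProb n d) ≤ 2 / (n * (1 / 10 : ℝ)) := by
      gcongr
      linarith
    have : 2 / (n * (1 / 10 : ℝ)) = 20 / n := by
      field_simp
      norm_num
    linarith [show 0 ≤ 1 / 2 * (d : ℝ)⁻¹ by positivity]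

lemma pairStep_expPotential_le [NeZero n] (x y : Fin n → Bool) :
    pairStep n (expPotential n) x y ≤ expPotential n x y + 2 * Real.exp (-n / 20) := by
  have drift (d : ℕ) (hd : d ≤ n) :
      pairMean n (flipProb n d) (fun x y => Real.exp (-hammingDist x y)) ≤
        1 * Real.exp (-d) + Real.exp (-n / 20) := by
    rw [one_mul]
    exact pairMean_flipProb_exp_neg_le hd
  have := pairStep_endpointSum_le (G := fun k => Real.exp (-k)) drift x y
  rwa [one_mul] at this

lemma pairStep_invPotential_le [NeZero n] (x y : Fin n → Bool) :
    pairStep n (invPotential n) x y ≤ 1 / 2 * invPotential n x y + 2 * (20 / n) :=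
  pairStep_endpointSum_le (G := fun k => (k : ℝ)⁻¹) (fun _ hd => pairMean_flipProb_inv_le hd) x y

lemma one_le_expPotential_add_invPotential [NeZero n] {α : ℝ} (hα : 0 < α) {x y : Fin n → Bool}
    (h : 1 - 2 * α < |overlap n (hammingDist x y)|) :
    1 ≤ expPotential n x y + α * n * invPotential n x y := by
  have hn : (0 : ℝ) < n := Nat.cast_pos.2 (NeZero.pos n)
  have near (m : ℕ) (hm : 1 - 2 * α < overlap n m) :
      1 ≤ Real.exp (-m) + α * n * (m : ℝ)⁻¹ := by
    rcases Nat.eq_zero_or_pos m with rfl | hm₀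
    · simp
    · have hm₁ : (0 : ℝ) < m := by exact_mod_cast hm₀
      have hmα : 2 * (m : ℝ) / n < 2 * α := by rw [overlap] at hm; linarith
      rw [div_lt_iff₀ hn] at hmα
      have : 1 ≤ α * n * (m : ℝ)⁻¹ := by
        rw [← div_eq_mul_inv, le_div_iff₀ hm₁]
        linarith
      linarith [Real.exp_pos (-m)]
  have term_nonneg (m : ℕ) : 0 ≤ Real.exp (-m) + α * n * (m : ℝ)⁻¹ := by positivity
  have split : expPotential n x y + α * n * invPotential n x y =
      (Real.exp (-hammingDist x y) + α * n * (hammingDist x y : ℝ)⁻¹) +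
        (Real.exp (-(n - hammingDist x y : ℕ)) + α * n * ((n - hammingDist x y : ℕ) : ℝ)⁻¹) := by
    simp only [expPotential, invPotential, endpointSum]
    ring
  rw [split]
  rcases lt_abs.1 h with h | h
  · linarith [near _ h, term_nonneg (n - hammingDist x y)]
  · rw [← overlap_sub (hammingDist_le x y)] at h
    linarith [near _ h, term_nonneg (hammingDist x y)]

end Potentials

section Lyapunov

variable {n : ℕ} {α γ ε : ℝ}

lemma pairStep_sqOverlap_le [NeZero n] (hα : 0 < α) (hγ : γ < 1)
    (contraction : ∀ d, |overlap n d| ≤ 1 - 2 * α →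
      (1 - 2 * flipProb n d) ^ 2 ≤ γ * overlap n d ^ 2) (x y : Fin n → Bool) :
    pairStep n (sqOverlap n) x y ≤ γ * sqOverlap n x y +
      (1 - γ) * (expPotential n x y + α * n * invPotential n x y) + 1 / n := by
  have hγ' : 0 ≤ 1 - γ := by linarith
  have second_moment : pairStep n (sqOverlap n) x y ≤
      (1 - 2 * flipProb n (hammingDist x y)) ^ 2 + 1 / n := pairMean_sq_overlap_le _
  rcases le_or_gt |overlap n (hammingDist x y)| (1 - 2 * α) with h | h
  · have contracted : (1 - 2 * flipProb n (hammingDist x y)) ^ 2 ≤ γ * sqOverlap n x y :=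
      contraction _ h
    have : 0 ≤ (1 - γ) * (expPotential n x y + α * n * invPotential n x y) :=
      mul_nonneg hγ' (add_nonneg (expPotential_nonneg x y)
        (mul_nonneg (by positivity) (invPotential_nonneg x y)))
    linarith
  · have nonexpansive : (1 - 2 * flipProb n (hammingDist x y)) ^ 2 ≤ sqOverlap n x y :=
      sq_one_sub_two_mul_flipProb_le (hammingDist_le x y)
    have : (1 - γ) * sqOverlap n x y ≤
        (1 - γ) * (expPotential n x y + α * n * invPotential n x y) :=
      mul_le_mul_of_nonneg_left
        ((sqOverlap_le_one x y).trans (one_le_expPotential_add_invPotential hα h)) hγ'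
    linarith

lemma layerMean_le_of_drift (hε₀ : 0 ≤ ε) (hε₁ : ε ≤ 1) (hγ : 0 ≤ γ) {C : ℝ} (hC : 0 ≤ C)
    {V H : (Fin n → Bool) → (Fin n → Bool) → ℝ} (drift : pairStep n V ≤ γ • V + H) (t : ℕ)
    (hH : ∀ s < t, layerMean n ε s H ≤ (1 - γ) * C) :
    layerMean n ε t V ≤ γ ^ t * pairMean n ε V + C := by
  induction t with
  | zero =>
    rw [pow_zero, one_mul]
    exact le_add_of_nonneg_right hC
  | succ t ih =>
    calc layerMean n ε (t + 1) V
        = layerMean n ε t (pairStep n V) := layerMean_succ ..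
      _ ≤ layerMean n ε t (γ • V + H) := monotone_layerMean hε₀ hε₁ drift
      _ = γ * layerMean n ε t V + layerMean n ε t H := by rw [layerMean_add, layerMean_smul]
      _ ≤ γ * (γ ^ t * pairMean n ε V + C) + (1 - γ) * C :=
          add_le_add (mul_le_mul_of_nonneg_left (ih fun s hs => hH s (by omega)) hγ)
            (hH t t.lt_succ_self)
      _ = γ ^ (t + 1) * pairMean n ε V + C := by ring

lemma layerMean_expPotential_le [NeZero n] (hε₀ : 0 ≤ ε) (hε : ε ≤ 1 / 2) (t : ℕ) :
    layerMean n ε t (expPotential n) ≤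
      2 * Real.exp (-(n * ε) / 2) + 2 * t * Real.exp (-n / 20) := by
  induction t with
  | zero =>
    have near := pairMean_exp_neg_hammingDist_le (n := n) hε₀ (by linarith)
    have far := pairMean_exp_neg_hammingDist_le (n := n) (p := 1 - ε) (by linarith) (by linarith)
    have : Real.exp (-(n * (1 - ε)) / 2) ≤ Real.exp (-(n * ε) / 2) := by
      gcongr
      linarith
    change pairMean n ε (expPotential n) ≤ _
    rw [expPotential, pairMean_endpointSum ε fun k => Real.exp (-k)]
    push_cast
    linarith
  | succ t ih =>
    have step : layerMean n ε t (pairStep n (expPotential n)) ≤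
        layerMean n ε t (expPotential n + fun _ _ => 2 * Real.exp (-n / 20)) :=
      monotone_layerMean hε₀ (by linarith) pairStep_expPotential_le
    rw [layerMean_add, layerMean_const] at step
    rw [layerMean_succ]
    push_cast
    linarith

lemma pairMean_invPotential_le [NeZero n] (hε₀ : 0 < ε) (hε : ε ≤ 1 / 2) :
    pairMean n ε (invPotential n) ≤ 4 / (n * ε) := by
  have hn : (0 : ℝ) < n := Nat.cast_pos.2 (NeZero.pos n)
  have bound {p : ℝ} (hεp : ε ≤ p) (hp : p ≤ 1) :
      pairMean n p (fun x y => (hammingDist x y : ℝ)⁻¹) ≤ 2 / (n * ε) :=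
    (pairMean_inv_hammingDist_le (hε₀.trans_le hεp) hp).trans (by gcongr; linarith)
  rw [invPotential, pairMean_endpointSum ε fun k => (k : ℝ)⁻¹]
  calc _ ≤ 2 / (n * ε) + 2 / (n * ε) :=
        add_le_add (bound le_rfl (by linarith)) (bound (by linarith) (by linarith))
    _ = 4 / (n * ε) := by ring

/-- The Lyapunov function of the pair chain: the squared overlap, plus a multiple of the inverse
potential whose own contraction pays for the pairs at distance within `α n` of `0` or `n`. -/
def lyapunov (n : ℕ) (α γ : ℝ) : (Fin n → Bool) → (Fin n → Bool) → ℝ :=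
  sqOverlap n + (4 * (1 - γ) * α * n) • invPotential n

lemma pairStep_lyapunov_le [NeZero n] (hα : 0 < α) (hγ₀ : 3 / 4 ≤ γ) (hγ : γ < 1)
    (contraction : ∀ d, |overlap n d| ≤ 1 - 2 * α →
      (1 - 2 * flipProb n d) ^ 2 ≤ γ * overlap n d ^ 2) :
    pairStep n (lyapunov n α γ) ≤ γ • lyapunov n α γ +
      ((1 - γ) • expPotential n + fun _ _ => 1 / n + 160 * (1 - γ) * α) := fun x y => by
  have hn : (0 : ℝ) < n := Nat.cast_pos.2 (NeZero.pos n)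
  have weight_nonneg : 0 ≤ (1 - γ) * α * n := by
    have := sub_nonneg.2 hγ.le
    positivity
  have overlap_drift := pairStep_sqOverlap_le hα hγ contraction x y
  have inv_drift := mul_le_mul_of_nonneg_left (pairStep_invPotential_le x y) weight_nonneg
  have cancel : (1 - γ) * α * n * (2 * (20 / n)) = 40 * ((1 - γ) * α) := by
    field_simp
    ring
  have absorb : 3 / 4 * ((1 - γ) * α * n * invPotential n x y) ≤
      γ * ((1 - γ) * α * n * invPotential n x y) :=
    mul_le_mul_of_nonneg_right hγ₀ (mul_nonneg weight_nonneg (invPotential_nonneg x y))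
  have split : pairStep n (lyapunov n α γ) x y =
      pairStep n (sqOverlap n) x y + 4 * ((1 - γ) * α * n * pairStep n (invPotential n) x y) := by
    rw [pairStep, lyapunov, pairMean_add, pairMean_smul, pairStep, pairStep]
    ring
  rw [split]
  simp only [lyapunov, Pi.add_apply, Pi.smul_apply, smul_eq_mul]
  rw [mul_add, cancel] at inv_drift
  linarith

lemma pairMean_lyapunov_le [NeZero n] (hα₀ : 0 ≤ α) (hα : α ≤ 1 / 4) (hγ₀ : 3 / 4 ≤ γ)
    (hγ : γ < 1) (hε₀ : 0 < ε) (hε : ε ≤ 1 / 2) :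
    pairMean n ε (lyapunov n α γ) ≤ 2 / ε := by
  have hn : (0 : ℝ) < n := Nat.cast_pos.2 (NeZero.pos n)
  have overlap_part : pairMean n ε (sqOverlap n) ≤ 1 := by
    rw [← pairMean_const n ε 1]
    exact monotone_pairMean hε₀.le (by linarith) sqOverlap_le_one
  have inv_part : 4 * (1 - γ) * α * n * pairMean n ε (invPotential n) ≤ 1 / ε := by
    have := sub_nonneg.2 hγ.le
    calc 4 * (1 - γ) * α * n * pairMean n ε (invPotential n)
        ≤ 4 * (1 - γ) * α * n * (4 / (n * ε)) := by
          gcongr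
          exact pairMean_invPotential_le hε₀ hε
      _ ≤ 4 * (1 / 4) * (1 / 4) * n * (4 / (n * ε)) := by
          gcongr
          linarith
      _ = 1 / ε := by field_simp
  have one_le : 1 ≤ 1 / ε := (one_le_div hε₀).2 (by linarith)
  rw [lyapunov, pairMean_add, pairMean_smul]
  calc _ ≤ 1 / ε + 1 / ε := add_le_add (overlap_part.trans one_le) inv_part
    _ = 2 / ε := by ring

theorem layerMean_sqOverlap_le [NeZero n] (hα₀ : 0 < α) (hα : α ≤ 1 / 4) (hγ₀ : 3 / 4 ≤ γ)
    (hγ : γ < 1) (hε₀ : 0 < ε) (hε : ε ≤ 1 / 2)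
    (contraction : ∀ d, |overlap n d| ≤ 1 - 2 * α →
      (1 - 2 * flipProb n d) ^ 2 ≤ γ * overlap n d ^ 2) (t : ℕ) :
    layerMean n ε t (sqOverlap n) ≤ 2 * (γ ^ t / ε) + (2 * Real.exp (-(n * ε) / 2) +
      2 * t * Real.exp (-n / 20) + 160 * α + 1 / (n * (1 - γ))) := by
  have hγ' : 0 < 1 - γ := by linarith
  have hn : (0 : ℝ) < n := Nat.cast_pos.2 (NeZero.pos n)
  set C := 2 * Real.exp (-(n * ε) / 2) + 2 * t * Real.exp (-n / 20) + 160 * α + 1 / (n * (1 - γ))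
  have forcing (s : ℕ) (hs : s < t) : layerMean n ε s
      ((1 - γ) • expPotential n + fun _ _ => 1 / n + 160 * (1 - γ) * α) ≤ (1 - γ) * C := by
    have monotone_time : 2 * (s : ℝ) * Real.exp (-n / 20) ≤ 2 * t * Real.exp (-n / 20) := by
      gcongr
    rw [layerMean_add, layerMean_smul, layerMean_const]
    calc _ ≤ (1 - γ) * (2 * Real.exp (-(n * ε) / 2) + 2 * t * Real.exp (-n / 20)) +
          (1 / n + 160 * (1 - γ) * α) := by
          gcongr
          linarith [layerMean_expPotential_le (n := n) hε₀.le hε s]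
      _ = (1 - γ) * C := by
          simp only [C]
          field_simp
          ring
  have le_lyapunov : sqOverlap n ≤ lyapunov n α γ := fun x y =>
    le_add_of_nonneg_right (mul_nonneg (by positivity) (invPotential_nonneg x y))
  calc layerMean n ε t (sqOverlap n)
      ≤ layerMean n ε t (lyapunov n α γ) := monotone_layerMean hε₀.le (by linarith) le_lyapunov
    _ ≤ γ ^ t * pairMean n ε (lyapunov n α γ) + C :=
        layerMean_le_of_drift hε₀.le (by linarith) (by linarith) (by positivity)
          (pairStep_lyapunov_le hα₀ hγ₀ hγ contraction) t forcing
    _ ≤ γ ^ t * (2 / ε) + C := by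
        gcongr
        exact pairMean_lyapunov_le hα₀.le hα hγ₀ hγ hε₀ hε
    _ = 2 * (γ ^ t / ε) + C := by ring

end Lyapunov

section Bound

variable {n T : ℕ} {α γ ε : ℝ}

theorem sq_annealedCov_le [NeZero n] (hα₀ : 0 < α) (hα : α ≤ 1 / 4) (hγ₀ : 3 / 4 ≤ γ)
    (hγ : γ < 1) (hε₀ : 0 < ε) (hε : ε ≤ 1 / 2)
    (contraction : ∀ d, |overlap n d| ≤ 1 - 2 * α →
      (1 - 2 * flipProb n d) ^ 2 ≤ γ * overlap n d ^ 2) (hT : T ≠ 0)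
    (h : (Fin n → Bool) → Bool) :
    annealedCov n T ε h ^ 2 ≤ 3 * (γ ^ T / ε) + (2 * Real.exp (-(n * ε) / 2) +
      2 * (T * Real.exp (-n / 20)) + 160 * α + 1 / n * (1 - γ)⁻¹) := by
  obtain ⟨t, rfl⟩ := Nat.exists_eq_add_one_of_ne_zero hT
  have last_layer : annealedCov n (t + 1) ε h ^ 2 ≤ layerMean n ε t (sqOverlap n) :=
    (sq_annealedCov_succ_le hε₀.le (by linarith) t h).trans <|
      monotone_layerMean hε₀.le (by linarith) fun _ _ =>
        sq_one_sub_two_mul_flipProb_le (hammingDist_le _ _)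
  have shift : 2 * (γ ^ t / ε) ≤ 3 * (γ ^ (t + 1) / ε) := by
    have : 0 ≤ γ ^ t / ε := by positivity
    rw [pow_succ, mul_div_right_comm]
    nlinarith
  have split : 1 / (n * (1 - γ)) = 1 / n * (1 - γ)⁻¹ := by rw [one_div, one_div, mul_inv]
  have := layerMean_sqOverlap_le hα₀ hα hγ₀ hγ hε₀ hε contraction t
  push_cast
  linarith [Real.exp_pos (-n / 20)]

end Bound

section Limits

variable {ι : Type*} {l : Filter ι} {ε : ι → ℝ}

lemma tendsto_div_log_atTop_of_le {u v : ι → ℝ} (hε₀ : ∀ i, 0 < ε i) (hε : ∀ i, ε i ≤ 1)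
    (hu : Tendsto (fun i => u i / Real.log (1 / ε i)) l atTop) (huv : ∀ i, u i ≤ v i) :
    Tendsto (fun i => v i / Real.log (1 / ε i)) l atTop :=
  tendsto_atTop_mono (fun i => div_le_div_of_nonneg_right (huv i)
    (Real.log_nonneg ((one_le_div (hε₀ i)).2 (hε i)))) hu

lemma tendsto_pow_div_nhds_zero {T : ι → ℕ} {γ : ℝ} (hγ₀ : 0 < γ) (hγ : γ < 1) (hε₀ : ∀ i, 0 < ε i)
    (hε : ∀ i, ε i ≤ 1 / 2) (hT : Tendsto (fun i => T i / Real.log (1 / ε i)) l atTop) :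
    Tendsto (fun i => γ ^ T i / ε i) l (nhds 0) := by
  have log_two_le (i : ι) : Real.log 2 ≤ Real.log (1 / ε i) :=
    Real.log_le_log two_pos ((le_div_iff₀ (hε₀ i)).2 (by linarith [hε i]))
  have log_pos (i : ι) : 0 < Real.log (1 / ε i) := (Real.log_pos one_lt_two).trans_le (log_two_le i)
  have rate_pos : 0 < -Real.log γ := neg_pos.2 (Real.log_neg hγ₀ hγ)
  have ratio : Tendsto (fun i => T i / Real.log (1 / ε i) * -Real.log γ - 1) l atTop :=
    tendsto_atTop_add_const_right l (-1) (hT.atTop_mul_const rate_pos)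
  have exponent : Tendsto (fun i => T i * -Real.log γ - Real.log (1 / ε i)) l atTop := by
    refine tendsto_atTop_mono' l ?_ (ratio.const_mul_atTop (Real.log_pos one_lt_two))
    filter_upwards [ratio.eventually_ge_atTop 0] with i hi
    calc _ ≤ Real.log (1 / ε i) * (T i / Real.log (1 / ε i) * -Real.log γ - 1) :=
          mul_le_mul_of_nonneg_right (log_two_le i) hi
      _ = T i * -Real.log γ - Real.log (1 / ε i) := by
          have := (log_pos i).ne'
          field_simp
  refine (Real.tendsto_exp_neg_atTop_nhds_zero.comp exponent).congr fun i => ?_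
  rw [Function.comp_apply, one_div, Real.log_inv,
    show -(T i * -Real.log γ - -Real.log (ε i)) = Real.log γ * T i - Real.log (ε i) by ring,
    Real.exp_sub, Real.exp_log (hε₀ i), Real.exp_mul, Real.exp_log hγ₀, Real.rpow_natCast]

lemma tendsto_mul_exp_neg_nhds_zero {b u : ℕ → ℝ} {c : ℝ} (hc : 0 < c)
    (hb : Tendsto b atTop (nhds 0)) (hu₀ : ∀ n, 0 ≤ u n) (hu : ∀ n, u n ≤ Real.exp (b n * n)) :
    Tendsto (fun n : ℕ => u n * Real.exp (-n / c)) atTop (nhds 0) := by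
  have decay : Tendsto (fun n : ℕ => Real.exp (-(n / (2 * c)))) atTop (nhds 0) :=
    Real.tendsto_exp_neg_atTop_nhds_zero.comp
      (tendsto_natCast_atTop_atTop.atTop_div_const (by positivity))
  refine squeeze_zero' (.of_forall fun n => mul_nonneg (hu₀ n) (Real.exp_nonneg _)) ?_ decay
  filter_upwards [hb.eventually_le_const (show 0 < 1 / (2 * c) by positivity)] with n hbn
  calc u n * Real.exp (-n / c)
      ≤ Real.exp (b n * n) * Real.exp (-n / c) := by gcongr; exact hu n
    _ ≤ Real.exp (1 / (2 * c) * n) * Real.exp (-n / c) := by gcongr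
    _ = Real.exp (-(n / (2 * c))) := by
        rw [← Real.exp_add]
        congr 1
        field_simp
        ring

end Limits

lemma tendsto_sq_annealedCov_bound {ε : ℕ → ℝ} {T : ℕ → ℕ} {α γ : ℝ} (hγ₀ : 0 < γ) (hγ : γ < 1)
    (hε₀ : ∀ n, 0 < ε n) (hε : ∀ n, ε n ≤ 1 / 2)
    (hnε : Tendsto (fun n : ℕ => n * ε n) atTop atTop)
    (hT : Tendsto (fun n => T n / Real.log (1 / ε n)) atTop atTop)
    (hTn : Tendsto (fun n : ℕ => T n * Real.exp (-n / 20)) atTop (nhds 0)) :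
    Tendsto (fun n : ℕ => 3 * (γ ^ T n / ε n) + (2 * Real.exp (-(n * ε n) / 2) +
      2 * (T n * Real.exp (-n / 20)) + 160 * α + 1 / n * (1 - γ)⁻¹)) atTop (nhds (160 * α)) := by
  have initial : Tendsto (fun n : ℕ => Real.exp (-(n * ε n) / 2)) atTop (nhds 0) := by
    refine (Real.tendsto_exp_neg_atTop_nhds_zero.comp (hnε.atTop_div_const two_pos)).congr
      fun n => ?_
    rw [Function.comp_apply, neg_div]
  simpa using ((tendsto_pow_div_nhds_zero hγ₀ hγ hε₀ hε hT).const_mul 3).add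
    ((((initial.const_mul 2).add (hTn.const_mul 2)).add_const (160 * α)).add
      (tendsto_one_div_atTop_nhds_zero_nat.mul_const (1 - γ)⁻¹))

theorem annealed_QNS_of_iid_weights_general
    (ε : ℕ → ℝ) (hε_pos : ∀ n, 0 < ε n) (hε_half : ∀ n, ε n ≤ 1 / 2)
    (hnε : Tendsto (fun n : ℕ => (n : ℝ) * ε n) atTop atTop)
    (T : ℕ → ℕ) (hT_log : Tendsto (fun n => T n / Real.log (1 / ε n)) atTop atTop)
    (hT_exp : Tendsto (fun n : ℕ => T n * Real.exp (-n / 20)) atTop (nhds 0))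
    (h : (n : ℕ) → (Fin n → Bool) → Bool) :
    Tendsto (fun n => annealedCov n (T n) (ε n) (h n)) atTop (nhds 0) := by
  suffices sq_tendsto : Tendsto (fun n => annealedCov n (T n) (ε n) (h n) ^ 2) atTop (nhds 0) by
    have abs_tendsto := sq_tendsto.sqrt
    simp only [Real.sqrt_sq_eq_abs, Real.sqrt_zero] at abs_tendsto
    exact (tendsto_zero_iff_abs_tendsto_zero _).2 abs_tendsto
  refine tendsto_order.2 ⟨fun a ha => .of_forall fun n => ha.trans_le (sq_nonneg _), fun a ha => ?_⟩
  obtain ⟨α, hα₀, hα⟩ : ∃ α, 0 < α ∧ α < min (1 / 4) (a / 160) :=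
    exists_between (lt_min (by norm_num) (by positivity))
  have hα_quarter : α < 1 / 4 := hα.trans_le (min_le_left _ _)
  obtain ⟨γ, hγ₀, hγ, contraction⟩ :=
    exists_sq_one_sub_two_mul_flipProb_le_mul hα₀ (show α < 1 / 2 by linarith)
  have bound_tendsto : Tendsto _ atTop (nhds (160 * α)) :=
    tendsto_sq_annealedCov_bound (by linarith) hγ hε_pos hε_half hnε hT_log hT_exp
  have hαa : 160 * α < a := by linarith [hα.trans_le (min_le_right _ _)]
  filter_upwards [bound_tendsto.eventually_lt_const hαa, eventually_ne_atTop 0,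
    hT_log.eventually_gt_atTop 0] with n bound_lt hn T_div_pos
  have : NeZero n := ⟨hn⟩
  have hT : T n ≠ 0 := fun hT => by simp [hT] at T_div_pos
  exact (sq_annealedCov_le hα₀ hα_quarter.le hγ₀ hγ (hε_pos n) (hε_half n) (contraction n)
    hT (h n)).trans_lt bound_lt

/-- for the fully connected sign network with i.i.d. standard normal weights,
if `1/2 ≥ ε_n ↓ 0` with `n ε_n → ∞`, `K_n / log(1/ε_n) → ∞`, `b_n → 0`, `n b_n → ∞` and
`T_n ∈ [K_n, e^{b_n n}]`, then for any Boolean functions `h_n` the network output is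
annealed quantitatively noise sensitive at level `{ε_n}`. -/
theorem annealed_QNS_of_iid_weights
    (ε : ℕ → ℝ) (hε_pos : ∀ n, 0 < ε n) (hε_half : ∀ n, ε n ≤ 1 / 2)
    (hε_anti : Antitone ε) (hε_lim : Tendsto ε atTop (nhds 0))
    (hnε : Tendsto (fun n : ℕ => (n : ℝ) * ε n) atTop atTop)
    (K : ℕ → ℝ) (hK : Tendsto (fun n => K n / Real.log (1 / ε n)) atTop atTop)
    (b : ℕ → ℝ) (hb0 : Tendsto b atTop (nhds 0))
    (hbn : Tendsto (fun n : ℕ => (n : ℝ) * b n) atTop atTop)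
    (T : ℕ → ℕ) (hT : ∀ n, K n ≤ (T n : ℝ) ∧ (T n : ℝ) ≤ Real.exp (b n * n))
    (h : (n : ℕ) → (Fin n → Bool) → Bool) :
    Tendsto (fun n => annealedCov n (T n) (ε n) (h n)) atTop (nhds 0) := by
  exact annealed_QNS_of_iid_weights_general ε hε_pos hε_half hnε T
    (tendsto_div_log_atTop_of_le hε_pos (fun n => (hε_half n).trans (by norm_num)) hK
      fun n => (hT n).1)
    (tendsto_mul_exp_neg_nhds_zero (by norm_num) hb0 (fun _ => Nat.cast_nonneg _)
      fun n => (hT n).2) h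

end
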